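/- Let γ > 0 and let μ̄ be a probability distribution on 𝔛; assume r̄(0) and θ(0) both have distribution μ̄. The following three statements are equivalent: (i) Σ_K is mean square stable and ‖Σ_K‖₂² < γ; (ii) Σ̄_K is mean square stable and ‖Σ̄_K‖₂² < γ, where the H₂ norm of Σ̄_K is defined analogously with θ in place of r̄; (iii) there exist symmetric positive definite matrices Q_χ ∈ ℝ^{n×n} for every χ ∈ 𝔛 such that Σ_{χ∈𝔛} tr(C_{K,χ} Q_χ C_{K,χ}ᵀ) < γ and Q_χ − D̄_χ(A_K Q A_Kᵀ + μ̄ E_K E_Kᵀ) is positive definite for every χ ∈ 𝔛, where (A_K Q A_Kᵀ)_χ = A_{K,χ} Q_χ A_{K,χ}ᵀ and (μ̄ E_K E_Kᵀ)_χ = μ̄(χ) E_{K,χ} E_{K,χ}ᵀ. -/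

import Mathlib

open MeasureTheory ProbabilityTheory Matrix

noncomputable section

/-- The state space `[N] × [M] × [N] × [T]` of the extended process `r̄`.
`Fin N`, `Fin M`, `Fin T` play the roles of `[N] = {1,…,N}`, `[M]`, `[T]`
(with `Fin T` being the 0-indexed version of `[T] = {1,…,T}`, i.e. `δ ∈ [T]`
corresponds to `δ - 1 : Fin T`). -/
abbrev XT (NN MM T : ℕ) : Type := Fin NN × Fin MM × Fin NN × Fin T

/-- `X` is a time-homogeneous Markov chain with transition probability matrix `P`:
for every `k`, every state `j` and every sequence of states `i`,
`Pr(X(k+1) = j ∧ X(l) = i l for all l ≤ k) = P (i k) j * Pr(X(l) = i l for all l ≤ k)`. -/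
def IsMarkovChain {Ω : Type} {_mΩ : MeasurableSpace Ω} (μ : Measure Ω) {S : Type}
    (X : ℕ → Ω → S) (P : S → S → ℝ) : Prop :=
  ∀ (k : ℕ) (j : S) (i : ℕ → S),
    (μ {ω | X (k + 1) ω = j ∧ ∀ l ≤ k, X l ω = i l}).toReal
      = P (i k) j * (μ {ω | ∀ l ≤ k, X l ω = i l}).toReal

/-- `⌊m⌋_T`, the unique element of `{0,…,T-1}` congruent to `m` modulo `T`, as `Fin T`. -/
def intToFin (T : ℕ) [NeZero T] (a : ℤ) : Fin T :=
  ⟨(a % (T : ℤ)).toNat, by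
    have hT : 0 < (T : ℤ) := by
      exact_mod_cast Nat.pos_of_ne_zero (NeZero.ne T)
    have h1 : 0 ≤ a % (T : ℤ) := Int.emod_nonneg a (by omega)
    have h2 : a % (T : ℤ) < (T : ℤ) := Int.emod_lt_of_pos a hT
    omega⟩

-- `τ(k)`: the most recent observation time `≤ k` (i.e. the largest `j ≤ k` with
-- `f(s(j)) = 1`), or `τ₀` if no observation has occurred up to time `k` (`k < t₀`).
open Classical in
def tauZ {Ω : Type} {MM : ℕ} (s : ℕ → Ω → Fin MM) (f : Fin MM → Bool)
    (τ₀ : ℤ) (k : ℕ) (ω : Ω) : ℤ :=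
  if ∃ j ≤ k, f (s j ω) = true
  then ((Nat.findGreatest (fun j => f (s j ω) = true) k : ℕ) : ℤ)
  else τ₀

-- `σ(k) = r(τ(k))` if an observation occurred by time `k` (i.e. `k ≥ t₀`), else `σ₀`.
open Classical in
def sigmaProc {Ω : Type} {NN MM : ℕ} (r : ℕ → Ω → Fin NN) (s : ℕ → Ω → Fin MM)
    (f : Fin MM → Bool) (σ₀ : Fin NN) (k : ℕ) (ω : Ω) : Fin NN :=
  if ∃ j ≤ k, f (s j ω) = true
  then r (Nat.findGreatest (fun j => f (s j ω) = true) k) ω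
  else σ₀

/-- `ρ(k) = ⌊k - τ(k)⌋_T + 1 ∈ [T]`, represented 0-indexed as `⌊k - τ(k)⌋_T : Fin T`. -/
def rhoProc {Ω : Type} {MM T : ℕ} [NeZero T] (s : ℕ → Ω → Fin MM) (f : Fin MM → Bool)
    (τ₀ : ℤ) (k : ℕ) (ω : Ω) : Fin T :=
  intToFin T ((k : ℤ) - tauZ s f τ₀ k ω)

/-- The extended process `r̄(k) = (r(k), s(k), σ(k), ρ(k))`. -/
def rbarProc {Ω : Type} {NN MM T : ℕ} [NeZero T] (r : ℕ → Ω → Fin NN)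
    (s : ℕ → Ω → Fin MM) (f : Fin MM → Bool) (τ₀ : ℤ) (σ₀ : Fin NN)
    (k : ℕ) (ω : Ω) : XT NN MM T :=
  (r k ω, s k ω, sigmaProc r s f σ₀ k ω, rhoProc s f τ₀ k ω)

/-- Membership in `𝔛`: if `f(β) = 1` then `α = γ` and `δ = 1` (0-indexed: `δ = 0`). -/
def inX {NN MM T : ℕ} [NeZero T] (f : Fin MM → Bool) (χ : XT NN MM T) : Prop :=
  f χ.2.1 = true → χ.1 = χ.2.2.1 ∧ χ.2.2.2 = 0

/-- The transition probabilities `p̄_{χχ'}` of the extended chain. The condition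
`⌊δ' - δ - 1⌋_T = 0` for `δ, δ' ∈ [T]` is, in 0-indexed form, `δ' = δ + 1` in `Fin T`. -/
def pbar {NN MM T : ℕ} [NeZero T] (P : Matrix (Fin NN) (Fin NN) ℝ)
    (Q : Matrix (Fin MM) (Fin MM) ℝ) (f : Fin MM → Bool) (χ χ' : XT NN MM T) : ℝ :=
  (if f χ'.2.1 = true
    then (if χ'.1 = χ'.2.2.1 ∧ χ'.2.2.2 = 0 then (1 : ℝ) else 0)
    else (if χ'.2.2.1 = χ.2.2.1 ∧ χ'.2.2.2 = χ.2.2.2 + 1 then (1 : ℝ) else 0))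
  * P χ.1 χ'.1 * Q χ.2.1 χ'.2.1

/-- The state trajectory of the closed-loop system
`x(k+1) = A(mode(k)) x(k) + E(mode(k)) w(k)`, `x(0) = x₀`. -/
def traj {Ω S : Type} {n q : ℕ}
    (Amat : S → Matrix (Fin n) (Fin n) ℝ) (Emat : S → Matrix (Fin n) (Fin q) ℝ)
    (mode : ℕ → Ω → S) (w : ℕ → Ω → Fin q → ℝ) (x0 : Fin n → ℝ) : ℕ → Ω → Fin n → ℝ
  | 0, _ => x0
  | (k + 1), ω =>
      (Amat (mode k ω)).mulVec (traj Amat Emat mode w x0 k ω)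
        + (Emat (mode k ω)).mulVec (w k ω)

/-- `A_{K,χ} = A_α + B_α K_{γ,δ}`. -/
def AKmat {NN MM T n m : ℕ} (A : Fin NN → Matrix (Fin n) (Fin n) ℝ)
    (B : Fin NN → Matrix (Fin n) (Fin m) ℝ)
    (K : Fin NN → Fin T → Matrix (Fin m) (Fin n) ℝ) (χ : XT NN MM T) :
    Matrix (Fin n) (Fin n) ℝ :=
  A χ.1 + B χ.1 * K χ.2.2.1 χ.2.2.2

/-- `C_{K,χ} = C_α + D_α K_{γ,δ}`. -/
def CKmat {NN MM T n m ℓ : ℕ} (C : Fin NN → Matrix (Fin ℓ) (Fin n) ℝ)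
    (D : Fin NN → Matrix (Fin ℓ) (Fin m) ℝ)
    (K : Fin NN → Fin T → Matrix (Fin m) (Fin n) ℝ) (χ : XT NN MM T) :
    Matrix (Fin ℓ) (Fin n) ℝ :=
  C χ.1 + D χ.1 * K χ.2.2.1 χ.2.2.2

/-- Squared Euclidean norm of a vector, as an extended nonnegative real. -/
def sqE {d : ℕ} (v : Fin d → ℝ) : ENNReal := ENNReal.ofReal (∑ i, (v i) ^ 2)

-- The operator `D̄_χ(R) = ∑_{χ' ∈ 𝔛} p̄_{χ'χ} R_{χ'}`.
open Classical in
def Dop {NN MM T n : ℕ} [NeZero T] (P : Matrix (Fin NN) (Fin NN) ℝ)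
    (Q : Matrix (Fin MM) (Fin MM) ℝ) (f : Fin MM → Bool)
    (R : XT NN MM T → Matrix (Fin n) (Fin n) ℝ) (χ : XT NN MM T) :
    Matrix (Fin n) (Fin n) ℝ :=
  ∑ χ' : XT NN MM T, if inX f χ' then pbar P Q f χ' χ • R χ' else 0

-- The operator `F̄_χ(Z) = ∑_{χ' ∈ 𝔛} p̄_{χχ'} Z_{χ,χ'}`.
open Classical in
def Fop {NN MM T n : ℕ} [NeZero T] (P : Matrix (Fin NN) (Fin NN) ℝ)
    (Q : Matrix (Fin MM) (Fin MM) ℝ) (f : Fin MM → Bool)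
    (Z : XT NN MM T → XT NN MM T → Matrix (Fin n) (Fin n) ℝ) (χ : XT NN MM T) :
    Matrix (Fin n) (Fin n) ℝ :=
  ∑ χ' : XT NN MM T, if inX f χ' then pbar P Q f χ χ' • Z χ χ' else 0

/-- A pair `(γ,δ) ∈ [N] × [T]` is admissible if `(α,β,γ,δ) ∈ 𝔛` for some `α, β`. -/
def Admissible {NN MM T : ℕ} [NeZero T] (f : Fin MM → Bool) (g : Fin NN) (d : Fin T) : Prop :=
  ∃ (α : Fin NN) (β : Fin MM), inX (T := T) f (α, β, g, d)

/-- A realization, on some probability space, of the pair of independent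
time-homogeneous Markov chains `(r, s)` with transition matrices `P` and `Q`. -/
structure MJLSReal (NN MM : ℕ) (P : Matrix (Fin NN) (Fin NN) ℝ)
    (Q : Matrix (Fin MM) (Fin MM) ℝ) : Type 1 where
  Ω : Type
  inst : MeasurableSpace Ω
  μ : @Measure Ω inst
  prob : IsProbabilityMeasure μ
  r : ℕ → Ω → Fin NN
  s : ℕ → Ω → Fin MM
  meas_r : ∀ k, Measurable[inst] (r k)
  meas_s : ∀ k, Measurable[inst] (s k)
  markov_r : IsMarkovChain μ r fun i j => P i j
  markov_s : IsMarkovChain μ s fun i j => Q i j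
  indep : IndepFun (fun ω l => r l ω) (fun ω l => s l ω) μ

/-- A realization, on some probability space, of a time-homogeneous Markov chain `θ`
taking values in `𝔛` with transition probabilities `p̄`. -/
structure ThetaReal (NN MM T : ℕ) [NeZero T] (P : Matrix (Fin NN) (Fin NN) ℝ)
    (Q : Matrix (Fin MM) (Fin MM) ℝ) (f : Fin MM → Bool) : Type 1 where
  Ω : Type
  inst : MeasurableSpace Ω
  μ : @Measure Ω inst
  prob : IsProbabilityMeasure μ
  θ : ℕ → Ω → XT NN MM T
  meas : ∀ k, Measurable[inst] (θ k)
  mem : ∀ k ω, inX f (θ k ω)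
  markov : IsMarkovChain μ θ (pbar P Q f)

/-- Mean square stability of the closed-loop system `Σ_K`: there are `c > 0` and
`λ ∈ [0,1)` such that for every realization, every deterministic initialization
(`r(0) = r₀`, `s(0) = s₀` a.s., together with `σ₀` and `τ₀ ≤ 0`, so that `r̄(0)`
is a deterministic element of `𝔛`), every `x₀` and every `k`,
`E[‖x(k)‖²] ≤ c λ^k ‖x₀‖²` (with `w ≡ 0`). -/
def MeanSquareStable {NN MM T n m q : ℕ} [NeZero T]
    (P : Matrix (Fin NN) (Fin NN) ℝ) (Qm : Matrix (Fin MM) (Fin MM) ℝ) (f : Fin MM → Bool)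
    (A : Fin NN → Matrix (Fin n) (Fin n) ℝ) (B : Fin NN → Matrix (Fin n) (Fin m) ℝ)
    (E : Fin NN → Matrix (Fin n) (Fin q) ℝ)
    (K : Fin NN → Fin T → Matrix (Fin m) (Fin n) ℝ) : Prop :=
  ∃ c : ℝ, 0 < c ∧ ∃ lam : ℝ, 0 ≤ lam ∧ lam < 1 ∧
    ∀ (S : MJLSReal NN MM P Qm) (τ₀ : ℤ), τ₀ ≤ 0 →
      ∀ (σ₀ r₀ : Fin NN) (s₀ : Fin MM),
        (∀ᵐ ω ∂S.μ, S.r 0 ω = r₀ ∧ S.s 0 ω = s₀) →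
        ∀ (x0 : Fin n → ℝ) (k : ℕ),
          (∫⁻ ω, sqE (traj (AKmat A B K) (fun χ => E χ.1)
              (rbarProc S.r S.s f τ₀ σ₀) (fun _ _ => 0) x0 k ω) ∂S.μ)
            ≤ ENNReal.ofReal (c * lam ^ k * ∑ i, (x0 i) ^ 2)

/-- Mean square stability of `Σ̄_K` (the system driven by the chain `θ`). -/
def MeanSquareStableBar {NN MM T n m q : ℕ} [NeZero T]
    (P : Matrix (Fin NN) (Fin NN) ℝ) (Qm : Matrix (Fin MM) (Fin MM) ℝ) (f : Fin MM → Bool)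
    (A : Fin NN → Matrix (Fin n) (Fin n) ℝ) (B : Fin NN → Matrix (Fin n) (Fin m) ℝ)
    (E : Fin NN → Matrix (Fin n) (Fin q) ℝ)
    (K : Fin NN → Fin T → Matrix (Fin m) (Fin n) ℝ) : Prop :=
  ∃ c : ℝ, 0 < c ∧ ∃ lam : ℝ, 0 ≤ lam ∧ lam < 1 ∧
    ∀ (S : ThetaReal NN MM T P Qm f) (χ : XT NN MM T), inX f χ →
      (∀ᵐ ω ∂S.μ, S.θ 0 ω = χ) →
      ∀ (x0 : Fin n → ℝ) (k : ℕ),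
        (∫⁻ ω, sqE (traj (AKmat A B K) (fun χ' => E χ'.1) S.θ (fun _ _ => 0) x0 k ω) ∂S.μ)
          ≤ ENNReal.ofReal (c * lam ^ k * ∑ i, (x0 i) ^ 2)

/-- The impulse disturbance `w = e_i φ`, i.e. `w(0) = e_i` and `w(k) = 0` for `k ≥ 1`. -/
def impulse {Ω : Type} (q : ℕ) (i : Fin q) : ℕ → Ω → Fin q → ℝ :=
  fun k _ j => if k = 0 ∧ j = i then 1 else 0

/-- `∑_k E[‖z(k; 0, χ, e_i φ)‖²]` for `Σ_K` on a given realization with data `(τ₀, σ₀)`. -/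
def H2TermSigma {NN MM T n m q ℓ : ℕ} [NeZero T]
    {P : Matrix (Fin NN) (Fin NN) ℝ} {Qm : Matrix (Fin MM) (Fin MM) ℝ}
    (S : MJLSReal NN MM P Qm) (f : Fin MM → Bool) (τ₀ : ℤ) (σ₀ : Fin NN)
    (A : Fin NN → Matrix (Fin n) (Fin n) ℝ) (B : Fin NN → Matrix (Fin n) (Fin m) ℝ)
    (C : Fin NN → Matrix (Fin ℓ) (Fin n) ℝ) (D : Fin NN → Matrix (Fin ℓ) (Fin m) ℝ)
    (E : Fin NN → Matrix (Fin n) (Fin q) ℝ)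
    (K : Fin NN → Fin T → Matrix (Fin m) (Fin n) ℝ) (i : Fin q) : ENNReal :=
  ∑' k : ℕ, ∫⁻ ω, sqE ((CKmat C D K (rbarProc S.r S.s f τ₀ σ₀ k ω)).mulVec
      (traj (AKmat A B K) (fun χ => E χ.1) (rbarProc S.r S.s f τ₀ σ₀)
        (impulse q i) 0 k ω)) ∂S.μ

-- `‖Σ_K‖₂² < γ`, where `‖Σ_K‖₂² = ∑_{i=1}^q ∑_{χ ∈ 𝔛} μ̄(χ) ‖z(⬝;0,χ,e_iφ)‖₂²` and the
-- expectations are over arbitrary realizations with deterministic initialization `r̄(0) = χ`.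
open Classical in
def H2SqLtSigma {NN MM T n m q ℓ : ℕ} [NeZero T]
    (P : Matrix (Fin NN) (Fin NN) ℝ) (Qm : Matrix (Fin MM) (Fin MM) ℝ) (f : Fin MM → Bool)
    (A : Fin NN → Matrix (Fin n) (Fin n) ℝ) (B : Fin NN → Matrix (Fin n) (Fin m) ℝ)
    (C : Fin NN → Matrix (Fin ℓ) (Fin n) ℝ) (D : Fin NN → Matrix (Fin ℓ) (Fin m) ℝ)
    (E : Fin NN → Matrix (Fin n) (Fin q) ℝ)
    (K : Fin NN → Fin T → Matrix (Fin m) (Fin n) ℝ)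
    (μbar : XT NN MM T → ℝ) (γ : ℝ) : Prop :=
  ∀ (S : Fin q → XT NN MM T → MJLSReal NN MM P Qm)
    (τ : Fin q → XT NN MM T → ℤ) (σv : Fin q → XT NN MM T → Fin NN),
    (∀ i χ, inX f χ → τ i χ ≤ 0 ∧
        (∀ᵐ ω ∂(S i χ).μ, rbarProc (S i χ).r (S i χ).s f (τ i χ) (σv i χ) 0 ω = χ)) →
    (∑ i : Fin q, ∑ χ : XT NN MM T,
        if inX f χ
        then ENNReal.ofReal (μbar χ) * H2TermSigma (S i χ) f (τ i χ) (σv i χ) A B C D E K i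
        else 0)
      < ENNReal.ofReal γ

/-- `∑_k E[‖z̄(k; 0, χ, e_i φ)‖²]` for `Σ̄_K` on a given realization of `θ`. -/
def H2TermBar {NN MM T n m q ℓ : ℕ} [NeZero T]
    {P : Matrix (Fin NN) (Fin NN) ℝ} {Qm : Matrix (Fin MM) (Fin MM) ℝ} {f : Fin MM → Bool}
    (S : ThetaReal NN MM T P Qm f)
    (A : Fin NN → Matrix (Fin n) (Fin n) ℝ) (B : Fin NN → Matrix (Fin n) (Fin m) ℝ)
    (C : Fin NN → Matrix (Fin ℓ) (Fin n) ℝ) (D : Fin NN → Matrix (Fin ℓ) (Fin m) ℝ)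
    (E : Fin NN → Matrix (Fin n) (Fin q) ℝ)
    (K : Fin NN → Fin T → Matrix (Fin m) (Fin n) ℝ) (i : Fin q) : ENNReal :=
  ∑' k : ℕ, ∫⁻ ω, sqE ((CKmat C D K (S.θ k ω)).mulVec
      (traj (AKmat A B K) (fun χ => E χ.1) S.θ (impulse q i) 0 k ω)) ∂S.μ

-- `‖Σ̄_K‖₂² < γ` (the `H₂` norm of `Σ̄_K`, defined with `θ` in place of `r̄`).
open Classical in
def H2SqLtBar {NN MM T n m q ℓ : ℕ} [NeZero T]
    (P : Matrix (Fin NN) (Fin NN) ℝ) (Qm : Matrix (Fin MM) (Fin MM) ℝ) (f : Fin MM → Bool)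
    (A : Fin NN → Matrix (Fin n) (Fin n) ℝ) (B : Fin NN → Matrix (Fin n) (Fin m) ℝ)
    (C : Fin NN → Matrix (Fin ℓ) (Fin n) ℝ) (D : Fin NN → Matrix (Fin ℓ) (Fin m) ℝ)
    (E : Fin NN → Matrix (Fin n) (Fin q) ℝ)
    (K : Fin NN → Fin T → Matrix (Fin m) (Fin n) ℝ)
    (μbar : XT NN MM T → ℝ) (γ : ℝ) : Prop :=
  ∀ (S : Fin q → XT NN MM T → ThetaReal NN MM T P Qm f),
    (∀ i χ, inX f χ → (∀ᵐ ω ∂(S i χ).μ, (S i χ).θ 0 ω = χ)) →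
    (∑ i : Fin q, ∑ χ : XT NN MM T,
        if inX f χ
        then ENNReal.ofReal (μbar χ) * H2TermBar (S i χ) A B C D E K i
        else 0)
      < ENNReal.ofReal γ

/-- The σ-algebra `Θ_k` generated by `r(0), s(0), …, r(k), s(k)`, for a realization. -/
def sigFiltSigma {NN MM : ℕ} {P : Matrix (Fin NN) (Fin NN) ℝ}
    {Q : Matrix (Fin MM) (Fin MM) ℝ} (S : MJLSReal NN MM P Q) (k : ℕ) :
    MeasurableSpace S.Ω :=
  ⨆ j ∈ Finset.range (k + 1),
    (MeasurableSpace.comap (S.r j) inferInstance ⊔ MeasurableSpace.comap (S.s j) inferInstance)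

/-- The σ-algebra generated by `θ(0), …, θ(k)`, for a realization of `θ`. -/
def sigFiltBar {NN MM T : ℕ} [NeZero T] {P : Matrix (Fin NN) (Fin NN) ℝ}
    {Q : Matrix (Fin MM) (Fin MM) ℝ} {f : Fin MM → Bool} (S : ThetaReal NN MM T P Q f)
    (k : ℕ) : MeasurableSpace S.Ω :=
  ⨆ j ∈ Finset.range (k + 1), MeasurableSpace.comap (S.θ j) inferInstance

/-- `Σ_K` satisfies `‖Σ_K‖∞² < γ`: there is `0 ≤ c < γ` such that `‖z‖₂² ≤ c ‖w‖₂²`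
for every realization, every deterministic initialization `r̄(0) = r̄₀ ∈ 𝔛`, and
every nonzero `w ∈ ℓ²(ℝ^q)` adapted to `(Θ_k)_k` (with `x₀ = 0`). -/
def HinfSqLtSigma {NN MM T n m q ℓ : ℕ} [NeZero T]
    (P : Matrix (Fin NN) (Fin NN) ℝ) (Qm : Matrix (Fin MM) (Fin MM) ℝ) (f : Fin MM → Bool)
    (A : Fin NN → Matrix (Fin n) (Fin n) ℝ) (B : Fin NN → Matrix (Fin n) (Fin m) ℝ)
    (C : Fin NN → Matrix (Fin ℓ) (Fin n) ℝ) (D : Fin NN → Matrix (Fin ℓ) (Fin m) ℝ)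
    (E : Fin NN → Matrix (Fin n) (Fin q) ℝ)
    (K : Fin NN → Fin T → Matrix (Fin m) (Fin n) ℝ) (γ : ℝ) : Prop :=
  ∃ c : ℝ, 0 ≤ c ∧ c < γ ∧
    ∀ (S : MJLSReal NN MM P Qm) (τ₀ : ℤ), τ₀ ≤ 0 → ∀ (σ₀ : Fin NN) (χ : XT NN MM T),
      inX f χ → (∀ᵐ ω ∂S.μ, rbarProc S.r S.s f τ₀ σ₀ 0 ω = χ) →
      ∀ (w : ℕ → S.Ω → Fin q → ℝ),
        (∀ k, Measurable[sigFiltSigma S k] (w k)) →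
        0 < (∑' k : ℕ, ∫⁻ ω, sqE (w k ω) ∂S.μ) →
        (∑' k : ℕ, ∫⁻ ω, sqE (w k ω) ∂S.μ) ≠ ⊤ →
        (∑' k : ℕ, ∫⁻ ω, sqE ((CKmat C D K (rbarProc S.r S.s f τ₀ σ₀ k ω)).mulVec
            (traj (AKmat A B K) (fun χ' => E χ'.1) (rbarProc S.r S.s f τ₀ σ₀) w 0 k ω)) ∂S.μ)
          ≤ ENNReal.ofReal c * (∑' k : ℕ, ∫⁻ ω, sqE (w k ω) ∂S.μ)

/-- `Σ̄_K` satisfies `‖Σ̄_K‖∞² < γ` (disturbances adapted to the filtration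
generated by `θ`). -/
def HinfSqLtBar {NN MM T n m q ℓ : ℕ} [NeZero T]
    (P : Matrix (Fin NN) (Fin NN) ℝ) (Qm : Matrix (Fin MM) (Fin MM) ℝ) (f : Fin MM → Bool)
    (A : Fin NN → Matrix (Fin n) (Fin n) ℝ) (B : Fin NN → Matrix (Fin n) (Fin m) ℝ)
    (C : Fin NN → Matrix (Fin ℓ) (Fin n) ℝ) (D : Fin NN → Matrix (Fin ℓ) (Fin m) ℝ)
    (E : Fin NN → Matrix (Fin n) (Fin q) ℝ)
    (K : Fin NN → Fin T → Matrix (Fin m) (Fin n) ℝ) (γ : ℝ) : Prop :=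
  ∃ c : ℝ, 0 ≤ c ∧ c < γ ∧
    ∀ (S : ThetaReal NN MM T P Qm f) (χ : XT NN MM T),
      inX f χ → (∀ᵐ ω ∂S.μ, S.θ 0 ω = χ) →
      ∀ (w : ℕ → S.Ω → Fin q → ℝ),
        (∀ k, Measurable[sigFiltBar S k] (w k)) →
        0 < (∑' k : ℕ, ∫⁻ ω, sqE (w k ω) ∂S.μ) →
        (∑' k : ℕ, ∫⁻ ω, sqE (w k ω) ∂S.μ) ≠ ⊤ →
        (∑' k : ℕ, ∫⁻ ω, sqE ((CKmat C D K (S.θ k ω)).mulVec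
            (traj (AKmat A B K) (fun χ' => E χ'.1) S.θ w 0 k ω)) ∂S.μ)
          ≤ ENNReal.ofReal c * (∑' k : ℕ, ∫⁻ ω, sqE (w k ω) ∂S.μ)

/-- The symmetric 4×4 block matrix appearing in the `H∞` LMI, with diagonal blocks
`D1, γ I_q, D3, I_ℓ`, sub-diagonal blocks `(3,1) = B31`, `(3,2) = B32`, `(4,1) = B41`,
the corresponding transposed blocks above the diagonal, and zeros elsewhere. -/
def hinfBlock {n q ℓ : ℕ} (γ : ℝ) (D1 D3 : Matrix (Fin n) (Fin n) ℝ)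
    (B31 : Matrix (Fin n) (Fin n) ℝ) (B32 : Matrix (Fin n) (Fin q) ℝ)
    (B41 : Matrix (Fin ℓ) (Fin n) ℝ) :
    Matrix ((Fin n ⊕ Fin q) ⊕ (Fin n ⊕ Fin ℓ)) ((Fin n ⊕ Fin q) ⊕ (Fin n ⊕ Fin ℓ)) ℝ :=
  Matrix.fromBlocks
    (Matrix.fromBlocks D1 0 0 (γ • (1 : Matrix (Fin q) (Fin q) ℝ)))
    (Matrix.fromBlocks B31ᵀ B41ᵀ B32ᵀ 0)
    (Matrix.fromBlocks B31 B32 B41 0)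
    (Matrix.fromBlocks D3 0 0 (1 : Matrix (Fin ℓ) (Fin ℓ) ℝ))

/-!
The process `r̄` is a recursion driven by the Markov chain `(r, s)`, which can be read off from it,
so it is itself a Markov chain, with kernel `p̄`. Hence every realization of `Σ_K` is one of `Σ̄_K`;
conversely, iterating independent random maps realizes `(r, s)` from any deterministic start, and
`(σ₀, τ₀)` can be chosen to start `r̄` anywhere in `𝔛`.

By the Markov property the second moments `χ ↦ E[x xᵀ; θ = χ]` evolve by the positive operator
`𝓛 R = D̄(A_K R A_Kᵀ)`, and quadratic costs by its trace dual. So both forms of stability say that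
`𝓛ᵏ 1` decays geometrically, and both squared `H₂` norms equal `∑ₖ ⟨C_Kᵀ C_K, 𝓛ᵏ G⟩` with
`G = D̄(μ̄ E_K E_Kᵀ)`.

What remains is a Lyapunov theorem for a positive operator on an ordered space with order unit `1`.
If `Q` and `Q - 𝓛 Q - G` are uniformly positive, then `𝓛` contracts `Q`, and `∑ₖ 𝓛ᵏ G ≤ Q` bounds
the cost. Conversely, a truncation of `∑ₖ 𝓛ᵏ (G + ε 1)` solves the strict inequality, and its cost
exceeds the squared `H₂` norm by `O(ε)`.
-/

lemma tsum_ofReal_lt_ofReal_iff {u : ℕ → ℝ} (hu : ∀ k, 0 ≤ u k) {γ : ℝ} :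
    ∑' k, ENNReal.ofReal (u k) < ENNReal.ofReal γ ↔
      ∃ H < γ, ∀ N, ∑ k ∈ Finset.range N, u k ≤ H := by
  have partial_sum (N : ℕ) : ENNReal.ofReal (∑ k ∈ Finset.range N, u k) =
      ∑ k ∈ Finset.range N, ENNReal.ofReal (u k) :=
    ENNReal.ofReal_sum_of_nonneg fun k _ => hu k
  constructor
  · intro hlt
    refine ⟨(∑' k, ENNReal.ofReal (u k)).toReal,
      (ENNReal.lt_ofReal_iff_toReal_lt hlt.ne_top).1 hlt, fun N => ?_⟩
    rw [← ENNReal.ofReal_le_iff_le_toReal hlt.ne_top, partial_sum]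
    exact ENNReal.sum_le_tsum _
  · rintro ⟨H, hHγ, hH⟩
    have hH0 : 0 ≤ H := by simpa using hH 0
    refine lt_of_le_of_lt (ENNReal.tsum_le_of_sum_range_le fun N => ?_)
      ((ENNReal.ofReal_lt_ofReal_iff_of_nonneg hH0).2 hHγ)
    rw [← partial_sum]
    exact ENNReal.ofReal_le_ofReal (hH N)

lemma sum_pow_sub_apply_sum_pow {R V : Type*} [Semiring R] [AddCommGroup V] [Module R V]
    (T : Module.End R V) (x : V) (N : ℕ) :
    ∑ k ∈ Finset.range N, (T ^ k) x - T (∑ k ∈ Finset.range N, (T ^ k) x) = x - (T ^ N) x := by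
  rw [map_sum, ← Finset.sum_sub_distrib]
  simpa [pow_succ'] using Finset.sum_range_sub' (fun k => (T ^ k) x) N

section OrderUnit

variable {V : Type*} [AddCommGroup V] [PartialOrder V] [Module ℝ V]

/-- `e` is a positive element some multiple of which dominates any given positive element.
Non-positive elements are not required to be dominated, because the Loewner order only compares
matrices whose difference is symmetric. -/
def IsOrderUnit (e : V) : Prop :=
  0 ≤ e ∧ ∀ x, 0 ≤ x → ∃ c : ℝ, 0 ≤ c ∧ x ≤ c • e

/-- The powers of `T` are bounded at `e` by a geometric sequence of ratio less than one; for a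
positive operator and an order unit `e` this is exponential stability on the positive cone. -/
def DecaysGeometrically (T : Module.End ℝ V) (e : V) : Prop :=
  ∃ c : ℝ, 0 < c ∧ ∃ r : ℝ, 0 ≤ r ∧ r < 1 ∧ ∀ k, (T ^ k) e ≤ (c * r ^ k) • e

/-- `x` dominates a positive multiple of `e`, so that for an order unit `e` it is interior to the
positive cone. -/
def IsUniformlyPositive (e x : V) : Prop :=
  ∃ a : ℝ, 0 < a ∧ a • e ≤ x

variable {T : Module.End ℝ V} {φ : V →ₗ[ℝ] ℝ} {e g q : V} {γ : ℝ}

lemma monotone_pow_end (hT : Monotone T) (k : ℕ) : Monotone (T ^ k) := by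
  rw [Module.End.coe_pow]
  exact hT.iterate k

lemma pow_apply_le_smul [PosSMulMono ℝ V] (hT : Monotone T) {r : ℝ} (hr : 0 ≤ r)
    (hq : T q ≤ r • q) (k : ℕ) : (T ^ k) q ≤ r ^ k • q := by
  induction k with
  | zero => simp
  | succ k ih =>
    calc (T ^ (k + 1)) q = T ((T ^ k) q) := by rw [pow_succ', Module.End.mul_apply]
      _ ≤ T (r ^ k • q) := hT ih
      _ = r ^ k • T q := map_smul _ _ _
      _ ≤ r ^ k • r • q := smul_le_smul_of_nonneg_left hq (pow_nonneg hr k)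
      _ = r ^ (k + 1) • q := by rw [smul_smul, pow_succ]

lemma IsUniformlyPositive.nonneg [PosSMulMono ℝ V] (he : 0 ≤ e)
    (hq : IsUniformlyPositive e q) : 0 ≤ q :=
  let ⟨_, ha, haq⟩ := hq
  (smul_nonneg ha.le he).trans haq

lemma sum_map_pow_le_of_decays (hφ : Monotone φ) {c r : ℝ} (hc : 0 ≤ c) (hr : 0 ≤ r) (hr1 : r < 1)
    (he : 0 ≤ e) (hdecay : ∀ k, (T ^ k) e ≤ (c * r ^ k) • e) (N : ℕ) :
    ∑ k ∈ Finset.range N, φ ((T ^ k) e) ≤ c * φ e / (1 - r) := by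
  have hφe : 0 ≤ φ e := by simpa using hφ he
  calc ∑ k ∈ Finset.range N, φ ((T ^ k) e)
      ≤ ∑ k ∈ Finset.range N, c * φ e * r ^ k := Finset.sum_le_sum fun k _ => by
        simpa [mul_right_comm] using hφ (hdecay k)
    _ = c * φ e * ∑ k ∈ Finset.range N, r ^ k := by rw [Finset.mul_sum]
    _ ≤ c * φ e * (1 - r)⁻¹ := by
        gcongr
        rw [← tsum_geometric_of_lt_one hr hr1]
        exact (summable_geometric_of_lt_one hr hr1).sum_le_tsum _ fun k _ => by positivity
    _ = c * φ e / (1 - r) := (div_eq_mul_inv _ _).symm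

variable [IsOrderedAddMonoid V]

lemma sum_pow_apply_le (hT : Monotone T) (hq : 0 ≤ q) (hg : T q + g ≤ q) (N : ℕ) :
    ∑ k ∈ Finset.range N, (T ^ k) g ≤ q := by
  have hg' : g ≤ q - T q := le_sub_iff_add_le'.2 hg
  have hTN : 0 ≤ (T ^ N) q := by simpa using monotone_pow_end hT N hq
  calc ∑ k ∈ Finset.range N, (T ^ k) g
      ≤ ∑ k ∈ Finset.range N, (T ^ k) (q - T q) :=
        Finset.sum_le_sum fun k _ => monotone_pow_end hT k hg'
    _ = ∑ k ∈ Finset.range N, ((T ^ k) q - (T ^ (k + 1)) q) := by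
        simp only [map_sub, pow_succ, Module.End.mul_apply]
    _ = q - (T ^ N) q := by rw [Finset.sum_range_sub' (fun k => (T ^ k) q)]; simp
    _ ≤ q := sub_le_self _ hTN

variable [IsOrderedModule ℝ V]

lemma DecaysGeometrically.of_lyapunov (he : IsOrderUnit e) (hT : Monotone T)
    (hq : IsUniformlyPositive e q) (hdrop : IsUniformlyPositive e (q - T q)) :
    DecaysGeometrically T e := by
  have hq0 : 0 ≤ q := hq.nonneg he.1
  obtain ⟨a, ha, haq⟩ := hq
  obtain ⟨b, hb, hbq⟩ := hdrop
  obtain ⟨c, hc, hqc⟩ := he.2 q hq0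
  have hcb : 0 < c + b := by positivity
  have hqcb : q ≤ (c + b) • e :=
    hqc.trans (smul_le_smul_of_nonneg_right (by linarith) he.1)
  have hr : 0 ≤ c / (c + b) := by positivity
  have contraction : T q ≤ (c / (c + b)) • q := by
    have hdrop' : (b / (c + b)) • q ≤ q - T q :=
      calc (b / (c + b)) • q ≤ (b / (c + b)) • (c + b) • e :=
            smul_le_smul_of_nonneg_left hqcb (by positivity)
        _ = b • e := by rw [smul_smul, div_mul_cancel₀ _ hcb.ne']
        _ ≤ q - T q := hbq
    calc T q ≤ q - (b / (c + b)) • q := le_sub_comm.1 hdrop'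
      _ = (1 - b / (c + b)) • q := by rw [sub_smul, one_smul]
      _ = (c / (c + b)) • q := by rw [one_sub_div hcb.ne', add_sub_cancel_right]
  refine ⟨a⁻¹ * (c + b), by positivity, c / (c + b), hr, (div_lt_one hcb).2 (by linarith),
    fun k => ?_⟩
  calc (T ^ k) e ≤ (T ^ k) (a⁻¹ • q) :=
        monotone_pow_end hT k ((le_inv_smul_iff_of_pos ha).2 haq)
    _ = a⁻¹ • (T ^ k) q := map_smul _ _ _
    _ ≤ a⁻¹ • (c / (c + b)) ^ k • (c + b) • e :=
        smul_le_smul_of_nonneg_left ((pow_apply_le_smul hT hr contraction k).trans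
          (smul_le_smul_of_nonneg_left hqcb (by positivity))) (by positivity)
    _ = (a⁻¹ * (c + b) * (c / (c + b)) ^ k) • e := by
        rw [smul_smul, smul_smul]; congr 1; ring

lemma exists_pow_apply_le_smul (he : IsOrderUnit e) (hT : Monotone T)
    (hdecay : DecaysGeometrically T e) (hg : 0 ≤ g) {ε : ℝ} (hε : 0 < ε) :
    ∃ N, (T ^ (N + 1)) g ≤ ε • e := by
  obtain ⟨c, -, r, hr, hr1, hdecay⟩ := hdecay
  obtain ⟨b, hb, hgb⟩ := he.2 g hg
  have hlim : Filter.Tendsto (fun N : ℕ => b * (c * r ^ (N + 1))) Filter.atTop (nhds 0) := by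
    simpa using (((tendsto_pow_atTop_nhds_zero_of_lt_one hr hr1).comp
      (Filter.tendsto_add_atTop_nat 1)).const_mul c).const_mul b
  obtain ⟨N, hN⟩ := (hlim.eventually_le_const hε).exists
  refine ⟨N, ?_⟩
  calc (T ^ (N + 1)) g ≤ (T ^ (N + 1)) (b • e) := monotone_pow_end hT _ hgb
    _ = b • (T ^ (N + 1)) e := map_smul _ _ _
    _ ≤ b • (c * r ^ (N + 1)) • e := smul_le_smul_of_nonneg_left (hdecay _) hb
    _ = (b * (c * r ^ (N + 1))) • e := smul_smul _ _ _
    _ ≤ ε • e := smul_le_smul_of_nonneg_right hN he.1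

/-- Slack in the bound `H < γ` pays for replacing `g` by `g + ε e` and truncating the Neumann
series, which makes both strict inequalities uniform. -/
lemma exists_lyapunov_of_decays (he : IsOrderUnit e) (hT : Monotone T) (hφ : Monotone φ)
    (hg : 0 ≤ g) (hdecay : DecaysGeometrically T e) {H : ℝ} (hHγ : H < γ)
    (hH : ∀ N, ∑ k ∈ Finset.range N, φ ((T ^ k) g) ≤ H) :
    ∃ q, IsUniformlyPositive e q ∧ φ q < γ ∧ IsUniformlyPositive e (q - (T q + g)) := by
  obtain ⟨c, hc, r, hr, hr1, hcr⟩ := id hdecay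
  set M := c * φ e / (1 - r)
  obtain ⟨ε, hε, hεM⟩ : ∃ ε : ℝ, 0 < ε ∧ H + ε * M < γ := by
    have hlim : Filter.Tendsto (fun ε : ℝ => H + ε * M) (nhdsWithin 0 (Set.Ioi 0)) (nhds H) := by
      have : Continuous fun ε : ℝ => H + ε * M := by fun_prop
      simpa using (this.tendsto 0).mono_left nhdsWithin_le_nhds
    obtain ⟨ε, hlt, hpos⟩ := ((hlim.eventually_lt_const hHγ).and self_mem_nhdsWithin).exists
    exact ⟨ε, hpos, hlt⟩
  have hgε : 0 ≤ g + ε • e := add_nonneg hg (smul_nonneg hε.le he.1)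
  obtain ⟨N, hN⟩ := exists_pow_apply_le_smul he hT hdecay hgε (half_pos hε)
  set q := ∑ k ∈ Finset.range (N + 1), (T ^ k) (g + ε • e) with hq
  have hle_q : g + ε • e ≤ q := by
    refine (Finset.single_le_sum (f := fun k => (T ^ k) (g + ε • e)) (fun k _ => ?_)
      (Finset.mem_range.2 N.succ_pos)).trans' (by simp)
    simpa using monotone_pow_end hT k hgε
  refine ⟨q, ⟨ε, hε, (le_add_of_nonneg_left hg).trans hle_q⟩, ?_, ⟨ε / 2, half_pos hε, ?_⟩⟩
  · calc φ q = ∑ k ∈ Finset.range (N + 1), φ ((T ^ k) g)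
          + ε * ∑ k ∈ Finset.range (N + 1), φ ((T ^ k) e) := by
          simp only [hq, map_sum, map_add, map_smul, smul_eq_mul, Finset.sum_add_distrib,
            Finset.mul_sum]
      _ ≤ H + ε * M := by
          gcongr
          exacts [hH _, sum_map_pow_le_of_decays hφ hc.le hr hr1 he.1 hcr _]
      _ < γ := hεM
  · calc (ε / 2) • e = ε • e - (ε / 2) • e := by rw [← sub_smul, sub_half]
      _ ≤ ε • e - (T ^ (N + 1)) (g + ε • e) := sub_le_sub_left hN _
      _ = q - T q - g := by rw [hq, sum_pow_sub_apply_sum_pow]; abel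
      _ = q - (T q + g) := sub_sub _ _ _

theorem decays_and_cost_lt_iff_exists_lyapunov (he : IsOrderUnit e) (hT : Monotone T)
    (hφ : Monotone φ) (hg : 0 ≤ g) :
    (DecaysGeometrically T e ∧ ∑' k, ENNReal.ofReal (φ ((T ^ k) g)) < ENNReal.ofReal γ) ↔
      ∃ q, IsUniformlyPositive e q ∧ φ q < γ ∧ IsUniformlyPositive e (q - (T q + g)) := by
  have hφT (k : ℕ) : 0 ≤ φ ((T ^ k) g) := by
    simpa using hφ (monotone_pow_end hT k hg)
  rw [tsum_ofReal_lt_ofReal_iff hφT]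
  constructor
  · rintro ⟨hdecay, H, hHγ, hH⟩
    exact exists_lyapunov_of_decays he hT hφ hg hdecay hHγ hH
  · rintro ⟨q, hq, hφq, b, hb, hbq⟩
    have hdrop : T q + g ≤ q := sub_nonneg.1 ((smul_nonneg hb.le he.1).trans hbq)
    refine ⟨.of_lyapunov he hT hq ⟨b, hb, hbq.trans (sub_le_sub_left
      (le_add_of_nonneg_right hg) q)⟩, φ q, hφq, fun N => ?_⟩
    simpa only [map_sum] using hφ (sum_pow_apply_le hT (hq.nonneg he.1) hdrop N)

lemma DecaysGeometrically.of_apply_pow_eq {L : Module.End ℝ V} (he : 0 ≤ e) (hL : Monotone L)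
    (hφ : Monotone φ) (hdom : ∀ x, 0 ≤ x → x ≤ φ x • e)
    (heq : ∀ k, φ ((L ^ k) e) = φ ((T ^ k) e)) (hT : DecaysGeometrically T e) :
    DecaysGeometrically L e := by
  obtain ⟨c, hc, r, hr, hr1, hdecay⟩ := hT
  have hφe : 0 ≤ φ e := by simpa using hφ he
  refine ⟨c * (φ e + 1), by positivity, r, hr, hr1, fun k => ?_⟩
  have hLk : 0 ≤ (L ^ k) e := by simpa using monotone_pow_end hL k he
  calc (L ^ k) e ≤ φ ((L ^ k) e) • e := hdom _ hLk
    _ ≤ (c * (φ e + 1) * r ^ k) • e := by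
      refine smul_le_smul_of_nonneg_right ?_ he
      calc φ ((L ^ k) e) ≤ φ ((c * r ^ k) • e) := by rw [heq]; exact hφ (hdecay k)
        _ = c * φ e * r ^ k := by rw [map_smul, smul_eq_mul]; ring
        _ ≤ c * (φ e + 1) * r ^ k := by gcongr; linarith

end OrderUnit

section LoewnerOrder

open scoped MatrixOrder

lemma mul_transpose_self_nonneg {ι κ : Type*} [Finite ι] [Fintype κ] (F : Matrix ι κ ℝ) :
    0 ≤ F * Fᵀ := by
  simpa only [conjTranspose_eq_transpose_of_trivial] using
    (posSemidef_self_mul_conjTranspose F).nonneg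

lemma transpose_mul_self_nonneg {ι κ : Type*} [Finite ι] [Fintype κ] (F : Matrix κ ι ℝ) :
    0 ≤ Fᵀ * F := by
  simpa only [transpose_transpose] using mul_transpose_self_nonneg Fᵀ

variable {ι : Type*} [Fintype ι] {M N : Matrix ι ι ℝ}

lemma trace_mul_nonneg (hM : 0 ≤ M) (hN : 0 ≤ N) : 0 ≤ (M * N).trace := by
  classical
  obtain ⟨B, rfl⟩ := CStarAlgebra.nonneg_iff_eq_star_mul_self.1 hN
  rw [← mul_assoc, trace_mul_comm, ← mul_assoc]
  exact (hM.posSemidef.mul_mul_conjTranspose_same B).trace_nonneg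

variable [DecidableEq ι]

lemma le_trace_smul_one (hM : 0 ≤ M) : M ≤ M.trace • 1 := by
  have hH : M.IsHermitian := hM.posSemidef.isHermitian
  rw [← Algebra.algebraMap_eq_smul_one]
  refine le_algebraMap_of_spectrum_le (fun x hx => ?_) hH
  rw [hH.spectrum_real_eq_range_eigenvalues] at hx
  obtain ⟨i, rfl⟩ := hx
  rw [hH.trace_eq_sum_eigenvalues]
  exact Finset.single_le_sum (fun j _ => hM.posSemidef.eigenvalues_nonneg j) (Finset.mem_univ i)

lemma le_smul_one_iff (hM : 0 ≤ M) {c : ℝ} :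
    M ≤ c • 1 ↔ ∀ v : ι → ℝ, v ⬝ᵥ M *ᵥ v ≤ c * (v ⬝ᵥ v) := by
  have hH : (c • (1 : Matrix ι ι ℝ) - M).IsHermitian :=
    (isHermitian_one.smul (IsSelfAdjoint.all c)).sub hM.posSemidef.isHermitian
  rw [le_iff, posSemidef_iff_dotProduct_mulVec, and_iff_right hH]
  simp [sub_mulVec, smul_mulVec, dotProduct_sub]

end LoewnerOrder

section UniformPositivity

open scoped MatrixOrder

variable {S ι : Type*} [Finite S] [Finite ι] [DecidableEq ι]

lemma exists_pos_le_of_finite {a : S → ℝ} (ha : ∀ i, 0 < a i) :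
    ∃ b, 0 < b ∧ ∀ i, b ≤ a i :=
  let ⟨b, hb⟩ := Finite.exists_ge fun i => (⟨a i, ha i⟩ : Set.Ioi (0 : ℝ))
  ⟨b, b.2, hb⟩

lemma posDef_iff_isUniformlyPositive {M : Matrix ι ι ℝ} : M.PosDef ↔ IsUniformlyPositive 1 M := by
  cases nonempty_fintype ι
  constructor
  · intro hM
    obtain ⟨a, ha, hle⟩ := exists_pos_le_of_finite hM.eigenvalues_pos
    refine ⟨a, ha, ?_⟩
    rw [← Algebra.algebraMap_eq_smul_one]
    refine algebraMap_le_of_le_spectrum (fun x hx => ?_) hM.isHermitian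
    rw [hM.isHermitian.spectrum_real_eq_range_eigenvalues] at hx
    obtain ⟨i, rfl⟩ := hx
    exact hle i
  · rintro ⟨a, ha, hle⟩
    simpa using (PosDef.one.smul ha).add_posSemidef (le_iff.1 hle)

lemma isUniformlyPositive_pi_iff {V : Type*} [AddCommGroup V] [PartialOrder V]
    [Module ℝ V] [IsOrderedModule ℝ V] {e x : S → V} (he : 0 ≤ e) :
    IsUniformlyPositive e x ↔ ∀ χ, IsUniformlyPositive (e χ) (x χ) := by
  constructor
  · rintro ⟨a, ha, hle⟩ χ
    exact ⟨a, ha, hle χ⟩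
  · intro h
    choose a ha hle using h
    obtain ⟨b, hb, hba⟩ := exists_pos_le_of_finite ha
    exact ⟨b, hb, fun χ => (smul_le_smul_of_nonneg_right (hba χ) (he χ)).trans (hle χ)⟩

lemma forall_posDef_iff_isUniformlyPositive {Q : S → Matrix ι ι ℝ} :
    (∀ χ, (Q χ).PosDef) ↔ IsUniformlyPositive 1 Q := by
  cases nonempty_fintype ι
  rw [isUniformlyPositive_pi_iff zero_le_one]
  exact forall_congr' fun _ => posDef_iff_isUniformlyPositive

end UniformPositivity

section CoupledOperators

open scoped MatrixOrder

variable {S ι : Type*} [Fintype S]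

/-- The operator `R ↦ (χ ↦ ∑ χ', p χ' χ • R χ')` pushing a family forward along the kernel `p`.
Its transpose `transferOp pᵀ` averages a family over the next state. -/
def transferOp {V : Type*} [AddCommGroup V] [Module ℝ V] (p : Matrix S S ℝ) :
    Module.End ℝ (S → V) where
  toFun R χ := ∑ χ', p χ' χ • R χ'
  map_add' R R' := by ext; simp [Finset.sum_add_distrib]
  map_smul' c R := by ext; simp [Finset.smul_sum, smul_comm c]

lemma transferOp_apply {V : Type*} [AddCommGroup V] [Module ℝ V] (p : Matrix S S ℝ) (R : S → V)
    (χ : S) : transferOp p R χ = ∑ χ', p χ' χ • R χ' := rfl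

lemma monotone_transferOp {V : Type*} [AddCommGroup V] [PartialOrder V] [IsOrderedAddMonoid V]
    [Module ℝ V] [PosSMulMono ℝ V] {p : Matrix S S ℝ} (hp : ∀ i j, 0 ≤ p i j) :
    Monotone (transferOp p : Module.End ℝ (S → V)) := fun _ _ hR χ =>
  Finset.sum_le_sum fun χ' _ => smul_le_smul_of_nonneg_left (hR χ') (hp χ' χ)

variable [Fintype ι]

/-- Congruence by the family `A`: the effect of one step `x ↦ A χ x` on second moments `x xᵀ`. -/
def congrOp {S : Type*} (A : S → Matrix ι ι ℝ) : Module.End ℝ (S → Matrix ι ι ℝ) where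
  toFun R χ := A χ * R χ * (A χ)ᵀ
  map_add' R R' := by ext; simp [mul_add, add_mul]
  map_smul' c R := by ext; simp

lemma congrOp_apply {S : Type*} (A R : S → Matrix ι ι ℝ) (χ : S) :
    congrOp A R χ = A χ * R χ * (A χ)ᵀ := rfl

lemma monotone_congrOp {S : Type*} (A : S → Matrix ι ι ℝ) : Monotone (congrOp A) :=
  fun _ _ hR χ => star_right_conjugate_le_conjugate (hR χ) (A χ)

/-- The trace pairing of a family `M` of quadratic costs with a family `R` of second moments. -/
def tracePairing : (S → Matrix ι ι ℝ) →ₗ[ℝ] (S → Matrix ι ι ℝ) →ₗ[ℝ] ℝ :=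
  LinearMap.mk₂ ℝ (fun M R => ∑ χ, (M χ * R χ).trace)
    (by simp [add_mul, Finset.sum_add_distrib]) (by simp [Finset.mul_sum])
    (by simp [mul_add, Finset.sum_add_distrib]) (by simp [Finset.mul_sum])

lemma tracePairing_apply (M R : S → Matrix ι ι ℝ) :
    tracePairing M R = ∑ χ, (M χ * R χ).trace := rfl

lemma tracePairing_comm (M R : S → Matrix ι ι ℝ) : tracePairing M R = tracePairing R M :=
  Finset.sum_congr rfl fun χ _ => trace_mul_comm (M χ) (R χ)

lemma monotone_tracePairing {M : S → Matrix ι ι ℝ} (hM : 0 ≤ M) : Monotone (tracePairing M) :=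
  (monotone_iff_map_nonneg (tracePairing M)).2 fun _ hR =>
    Finset.sum_nonneg fun χ _ => trace_mul_nonneg (hM χ) (hR χ)

lemma tracePairing_transferOp (p : Matrix S S ℝ) (M R : S → Matrix ι ι ℝ) :
    tracePairing M (transferOp p R) = tracePairing (transferOp pᵀ M) R := by
  simp only [tracePairing_apply, transferOp_apply, Finset.mul_sum, Finset.sum_mul, trace_sum,
    Matrix.mul_smul, Matrix.smul_mul, trace_smul, transpose_apply]
  exact Finset.sum_comm

lemma tracePairing_congrOp (A M R : S → Matrix ι ι ℝ) :
    tracePairing M (congrOp A R) = tracePairing (congrOp (fun χ => (A χ)ᵀ) M) R := by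
  simp only [tracePairing_apply, congrOp_apply, transpose_transpose]
  refine Finset.sum_congr rfl fun χ _ => ?_
  rw [← mul_assoc, trace_mul_comm, ← mul_assoc, ← mul_assoc]

/-- The evolution `R ↦ D (A R Aᵀ)` of the second moments `χ ↦ E[x xᵀ; θ = χ]` of the system
`x ↦ A θ x` driven by a Markov chain `θ` with kernel `p`. -/
def secondMomentOp (p : Matrix S S ℝ) (A : S → Matrix ι ι ℝ) : Module.End ℝ (S → Matrix ι ι ℝ) :=
  transferOp p ∘ₗ congrOp A

/-- The evolution of quadratic costs dual to `secondMomentOp p A`: the cost `M` one step later has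
expectation `costOp p A M` given the present state. -/
def costOp (p : Matrix S S ℝ) (A : S → Matrix ι ι ℝ) : Module.End ℝ (S → Matrix ι ι ℝ) :=
  congrOp (fun χ => (A χ)ᵀ) ∘ₗ transferOp pᵀ

variable {p : Matrix S S ℝ}

lemma monotone_secondMomentOp (hp : ∀ i j, 0 ≤ p i j) (A : S → Matrix ι ι ℝ) :
    Monotone (secondMomentOp p A) :=
  (monotone_transferOp hp).comp (monotone_congrOp A)

lemma monotone_costOp (hp : ∀ i j, 0 ≤ p i j) (A : S → Matrix ι ι ℝ) :
    Monotone (costOp p A) :=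
  (monotone_congrOp _).comp (monotone_transferOp fun i j => hp j i)

lemma tracePairing_secondMomentOp_pow (p : Matrix S S ℝ) (A M R : S → Matrix ι ι ℝ) (k : ℕ) :
    tracePairing M ((secondMomentOp p A ^ k) R) = tracePairing ((costOp p A ^ k) M) R := by
  induction k generalizing M with
  | zero => rfl
  | succ k ih =>
    rw [pow_succ', pow_succ, Module.End.mul_apply, Module.End.mul_apply, ← ih]
    simp only [secondMomentOp, costOp, LinearMap.comp_apply, tracePairing_transferOp,
      tracePairing_congrOp]

variable [DecidableEq ι]

lemma le_tracePairing_one_smul_one {R : S → Matrix ι ι ℝ} (hR : 0 ≤ R) :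
    R ≤ tracePairing 1 R • 1 := fun χ => by
  refine (le_trace_smul_one (hR χ)).trans (smul_le_smul_of_nonneg_right ?_ zero_le_one)
  simp only [tracePairing_apply, Pi.one_apply, one_mul]
  exact Finset.single_le_sum (f := fun χ => (R χ).trace)
    (fun χ' _ => (hR χ').posSemidef.trace_nonneg) (Finset.mem_univ χ)

lemma isOrderUnit_one {S ι : Type*} [Finite S] [Finite ι] [DecidableEq ι] :
    IsOrderUnit (1 : S → Matrix ι ι ℝ) := by
  cases nonempty_fintype S
  cases nonempty_fintype ι
  exact ⟨zero_le_one, fun R hR => ⟨tracePairing 1 R,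
    by simpa using monotone_tracePairing zero_le_one hR, le_tracePairing_one_smul_one hR⟩⟩

lemma decaysGeometrically_costOp_iff (hp : ∀ i j, 0 ≤ p i j) (A : S → Matrix ι ι ℝ) :
    DecaysGeometrically (costOp p A) 1 ↔ DecaysGeometrically (secondMomentOp p A) 1 := by
  have heq (k : ℕ) : tracePairing 1 ((costOp p A ^ k) 1) =
      tracePairing 1 ((secondMomentOp p A ^ k) 1) := by
    rw [tracePairing_secondMomentOp_pow, tracePairing_comm]
  have hmono := monotone_tracePairing (zero_le_one (α := S → Matrix ι ι ℝ))
  exact ⟨.of_apply_pow_eq zero_le_one (monotone_secondMomentOp hp A) hmono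
      (fun _ => le_tracePairing_one_smul_one) fun k => (heq k).symm,
    .of_apply_pow_eq zero_le_one (monotone_costOp hp A) hmono
      (fun _ => le_tracePairing_one_smul_one) heq⟩

end CoupledOperators

section OneStep

lemma lintegral_comp_pair_eq_sum {Ω H S : Type*} [MeasurableSpace Ω] {μ : Measure Ω}
    [Finite H] [MeasurableSpace H] [MeasurableSingletonClass H]
    [Fintype S] [MeasurableSpace S] [MeasurableSingletonClass S]
    {Y : Ω → H} {Z : Ω → S} (hY : Measurable Y) (hZ : Measurable Z) {κ : H → S → ENNReal}
    (hκ : ∀ h j, μ {ω | Z ω = j ∧ Y ω = h} = κ h j * μ {ω | Y ω = h}) (F : H → S → ENNReal) :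
    ∫⁻ ω, F (Y ω) (Z ω) ∂μ = ∫⁻ ω, ∑ j, κ (Y ω) j * F (Y ω) j ∂μ := by
  cases nonempty_fintype H
  calc ∫⁻ ω, F (Y ω) (Z ω) ∂μ
      = ∫⁻ z, F z.2 z.1 ∂(μ.map fun ω => (Z ω, Y ω)) :=
        (lintegral_map (f := fun z : S × H => F z.2 z.1) .of_discrete (hZ.prodMk hY)).symm
    _ = ∑ h, (∑ j, κ h j * F h j) * (μ.map Y) {h} := by
        rw [lintegral_fintype, Fintype.sum_prod_type_right]
        refine Finset.sum_congr rfl fun h _ => ?_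
        rw [Finset.sum_mul]
        refine Finset.sum_congr rfl fun j _ => ?_
        have hpair : (fun ω => (Z ω, Y ω)) ⁻¹' {(j, h)} = {ω | Z ω = j ∧ Y ω = h} := by
          ext ω
          exact Prod.mk_inj
        rw [Measure.map_apply (hZ.prodMk hY) (measurableSet_singleton _),
          Measure.map_apply hY (measurableSet_singleton _), hpair, hκ, mul_comm (F h j),
          mul_right_comm]
        rfl
    _ = ∫⁻ ω, ∑ j, κ (Y ω) j * F (Y ω) j ∂μ := by
        rw [← lintegral_fintype,
          lintegral_map (f := fun h => ∑ j, κ h j * F h j) .of_discrete hY]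

variable {Ω S : Type} {mΩ : MeasurableSpace Ω} {μ : Measure Ω} {X : ℕ → Ω → S}

namespace IsMarkovChain

lemma measure_succ [IsFiniteMeasure μ] {p : S → S → ℝ} (hX : IsMarkovChain μ X p)
    (hp : ∀ i j, 0 ≤ p i j) (k : ℕ) (j : S) (i : ℕ → S) :
    μ {ω | X (k + 1) ω = j ∧ ∀ l ≤ k, X l ω = i l} =
      ENNReal.ofReal (p (i k) j) * μ {ω | ∀ l ≤ k, X l ω = i l} := by
  rw [← ENNReal.ofReal_toReal (measure_ne_top μ {ω | X (k + 1) ω = j ∧ ∀ l ≤ k, X l ω = i l}),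
    hX k j i, ENNReal.ofReal_mul (hp _ _), ENNReal.ofReal_toReal (measure_ne_top _ _)]

lemma of_comp_injective {S' : Type} {g : S → S'} (hg : Function.Injective g) {p : S' → S' → ℝ}
    (hX : IsMarkovChain μ (fun k ω => g (X k ω)) p) :
    IsMarkovChain μ X fun χ χ' => p (g χ) (g χ') := by
  intro k j i
  simpa only [hg.eq_iff] using hX k (g j) fun l => g (i l)

variable [IsFiniteMeasure μ] [Fintype S] [MeasurableSpace S] [MeasurableSingletonClass S]

lemma lintegral_succ {p : S → S → ℝ} (hX : IsMarkovChain μ X p) (hp : ∀ i j, 0 ≤ p i j)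
    (hXm : ∀ k, Measurable (X k)) {k : ℕ} {F : (ℕ → S) → S → ENNReal}
    (hF : DependsOn F (Set.Iic k)) :
    ∫⁻ ω, F (fun l => X l ω) (X (k + 1) ω) ∂μ =
      ∫⁻ ω, ∑ j, ENNReal.ofReal (p (X k ω) j) * F (fun l => X l ω) j ∂μ := by
  let past (ω : Ω) (l : Fin (k + 1)) : S := X l ω
  let halted (h : Fin (k + 1) → S) (l : ℕ) : S := h ⟨min l k, by omega⟩
  have past_eq_iff (ω : Ω) (h : Fin (k + 1) → S) :
      past ω = h ↔ ∀ l ≤ k, X l ω = halted h l := by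
    simp only [funext_iff, Fin.forall_iff, Nat.lt_succ_iff, past, halted]
    exact forall₂_congr fun l hl => by simp only [min_eq_left hl]
  have hF_halted (ω : Ω) : F (fun l => X l ω) = F (halted (past ω)) :=
    hF fun l hl => (past_eq_iff ω _).1 rfl l hl
  have hX_halted (ω : Ω) : X k ω = halted (past ω) k := (past_eq_iff ω _).1 rfl k le_rfl
  simp only [hF_halted]
  rw [lintegral_comp_pair_eq_sum (measurable_pi_lambda past fun l => hXm l) (hXm (k + 1))
    (κ := fun h j => ENNReal.ofReal (p (halted h k) j)) (fun h j => ?_)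
    (fun h => F (halted h))]
  · simp only [hX_halted]
  · simpa only [past_eq_iff] using hX.measure_succ hp k j (halted h)

end IsMarkovChain

end OneStep

section Trajectories

variable {Ω S : Type} {n q : ℕ}

lemma traj_comp {S' : Type} (g : S → S') (A : S' → Matrix (Fin n) (Fin n) ℝ)
    (E : S' → Matrix (Fin n) (Fin q) ℝ) (X : ℕ → Ω → S) (w : ℕ → Ω → Fin q → ℝ)
    (x0 : Fin n → ℝ) :
    traj A E (fun k ω => g (X k ω)) w x0 = traj (fun χ => A (g χ)) (fun χ => E (g χ)) X w x0 := by
  ext k ω : 2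
  induction k with
  | zero => rfl
  | succ k ih => simp only [traj, ih]

variable (A : S → Matrix (Fin n) (Fin n) ℝ) (E : S → Matrix (Fin n) (Fin q) ℝ)
  (X : ℕ → Ω → S) (u : ℕ → Fin q → ℝ) (x0 : Fin n → ℝ)

lemma traj_eq_traj_path (k : ℕ) (ω : Ω) :
    traj A E X (fun l _ => u l) x0 k ω =
      traj A E (fun l (h : ℕ → S) => h l) (fun l _ => u l) x0 k fun l => X l ω := by
  induction k with
  | zero => rfl
  | succ k ih => simp only [traj, ih]

lemma dependsOn_traj_path (k : ℕ) :
    DependsOn (traj A E (fun l (h : ℕ → S) => h l) (fun l _ => u l) x0 k) (Set.Iio k) := by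
  intro h h' heq
  induction k with
  | zero => rfl
  | succ k ih =>
    have hk : h k = h' k := heq k (Set.mem_Iio.2 k.lt_succ_self)
    have hpast := ih fun l hl => heq l (Set.mem_Iio.2 (hl.trans k.lt_succ_self))
    simp only [traj, hk, hpast]

/-- The expectation of `x(k)ᵀ M(X(k)) x(k)` along the trajectory `x` driven by the modes `X` and
the deterministic disturbance `u`. -/
def expectedCost {_mΩ : MeasurableSpace Ω} (μ : Measure Ω) (M : S → Matrix (Fin n) (Fin n) ℝ)
    (k : ℕ) : ENNReal :=
  ∫⁻ ω, ENNReal.ofReal (traj A E X (fun l _ => u l) x0 k ω ⬝ᵥ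
    M (X k ω) *ᵥ traj A E X (fun l _ => u l) x0 k ω) ∂μ

end Trajectories

section ExpectedCost

open scoped MatrixOrder

lemma dotProduct_mulVec_congr {ι κ : Type*} [Fintype ι] [Fintype κ] (N : Matrix ι ι ℝ)
    (F : Matrix ι κ ℝ) (v : κ → ℝ) :
    (F *ᵥ v) ⬝ᵥ N *ᵥ F *ᵥ v = v ⬝ᵥ (Fᵀ * N * F) *ᵥ v := by
  rw [← mulVec_mulVec, ← mulVec_mulVec, dotProduct_mulVec v, vecMul_transpose]

variable {Ω S : Type} {n q : ℕ} {mΩ : MeasurableSpace Ω} {μ : Measure Ω} {X : ℕ → Ω → S}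
  {A : S → Matrix (Fin n) (Fin n) ℝ} {E : S → Matrix (Fin n) (Fin q) ℝ}
  {u : ℕ → Fin q → ℝ} {x0 : Fin n → ℝ} [Fintype S] {p : Matrix S S ℝ}
  {M : S → Matrix (Fin n) (Fin n) ℝ} {χ : S}

lemma ofReal_quadratic_transferOp (hp : ∀ i j, 0 ≤ p i j) (hM : 0 ≤ M) (χ : S)
    (v : Fin n → ℝ) :
    ENNReal.ofReal (v ⬝ᵥ transferOp pᵀ M χ *ᵥ v) =
      ∑ j, ENNReal.ofReal (p χ j) * ENNReal.ofReal (v ⬝ᵥ M j *ᵥ v) := by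
  have hv (j : S) : 0 ≤ v ⬝ᵥ M j *ᵥ v := (hM j).posSemidef.dotProduct_mulVec_nonneg v
  simp only [← ENNReal.ofReal_mul (hp _ _)]
  rw [← ENNReal.ofReal_sum_of_nonneg fun j _ => mul_nonneg (hp χ j) (hv j)]
  simp only [transferOp_apply, transpose_apply, sum_mulVec, smul_mulVec, dotProduct_sum,
    dotProduct_smul, smul_eq_mul]

section Markov

variable [IsFiniteMeasure μ] [MeasurableSpace S] [MeasurableSingletonClass S]

lemma expectedCost_succ (hX : IsMarkovChain μ X p) (hp : ∀ i j, 0 ≤ p i j)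
    (hXm : ∀ k, Measurable (X k)) (hM : 0 ≤ M) (k : ℕ) :
    expectedCost A E X u x0 μ M (k + 1) =
      ∫⁻ ω, ENNReal.ofReal (traj A E X (fun l _ => u l) x0 (k + 1) ω ⬝ᵥ
        transferOp pᵀ M (X k ω) *ᵥ traj A E X (fun l _ => u l) x0 (k + 1) ω) ∂μ := by
  let x (h : ℕ → S) := traj A E (fun l (h : ℕ → S) => h l) (fun l _ => u l) x0 (k + 1) h
  have hx : DependsOn (fun h j => ENNReal.ofReal (x h ⬝ᵥ M j *ᵥ x h)) (Set.Iic k) := by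
    intro h h' heq
    have : x h = x h' := dependsOn_traj_path A E u x0 (k + 1) fun l hl =>
      heq l (Nat.lt_succ_iff.1 hl)
    simp only [this]
  simp only [expectedCost, traj_eq_traj_path A E X u x0]
  rw [hX.lintegral_succ hp hXm hx]
  simp only [ofReal_quadratic_transferOp hp hM, x]

lemma expectedCost_succ_of_eq_zero (hX : IsMarkovChain μ X p) (hp : ∀ i j, 0 ≤ p i j)
    (hXm : ∀ k, Measurable (X k)) (hM : 0 ≤ M) {k : ℕ} (hu : u k = 0) :
    expectedCost A E X u x0 μ M (k + 1) = expectedCost A E X u x0 μ (costOp p A M) k := by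
  rw [expectedCost_succ hX hp hXm hM]
  simp only [expectedCost, traj, hu, mulVec_zero, add_zero, dotProduct_mulVec_congr, costOp,
    LinearMap.comp_apply, congrOp_apply, transpose_transpose]

lemma expectedCost_add_of_eq_zero (hX : IsMarkovChain μ X p) (hp : ∀ i j, 0 ≤ p i j)
    (hXm : ∀ k, Measurable (X k)) (hM : 0 ≤ M) {k₀ : ℕ} (hu : ∀ k, k₀ ≤ k → u k = 0) (k : ℕ) :
    expectedCost A E X u x0 μ M (k₀ + k) =
      expectedCost A E X u x0 μ ((costOp p A ^ k) M) k₀ := by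
  induction k generalizing M with
  | zero => rfl
  | succ k ih =>
    have hLM : 0 ≤ costOp p A M := by simpa using monotone_costOp hp A hM
    rw [← add_assoc, expectedCost_succ_of_eq_zero hX hp hXm hM (hu _ le_self_add), ih hLM,
      pow_succ, Module.End.mul_apply]

end Markov

section DeterministicStart

variable [IsProbabilityMeasure μ] [MeasurableSpace S] [MeasurableSingletonClass S]

lemma lintegral_ae_const {Ω : Type*} {_mΩ : MeasurableSpace Ω} {μ : Measure Ω}
    [IsProbabilityMeasure μ] {F : Ω → ENNReal} {c : ENNReal} (h : ∀ᵐ ω ∂μ, F ω = c) :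
    ∫⁻ ω, F ω ∂μ = c := by
  rw [lintegral_congr_ae h, lintegral_const, measure_univ, mul_one]

lemma expectedCost_of_free (hX : IsMarkovChain μ X p)
    (hp : ∀ i j, 0 ≤ p i j) (hXm : ∀ k, Measurable (X k)) (hM : 0 ≤ M)
    (hX0 : ∀ᵐ ω ∂μ, X 0 ω = χ) (k : ℕ) :
    expectedCost A E X 0 x0 μ M k =
      ENNReal.ofReal (x0 ⬝ᵥ ((costOp p A ^ k) M) χ *ᵥ x0) := by
  have h := expectedCost_add_of_eq_zero (A := A) (E := E) (u := 0) (x0 := x0) (k₀ := 0)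
    hX hp hXm hM (fun _ _ => rfl) k
  rw [zero_add] at h
  rw [h]
  exact lintegral_ae_const (hX0.mono fun ω hω => by simp only [traj, hω])

lemma expectedCost_succ_of_impulse (hX : IsMarkovChain μ X p)
    (hp : ∀ i j, 0 ≤ p i j) (hXm : ∀ k, Measurable (X k)) (hM : 0 ≤ M)
    (hX0 : ∀ᵐ ω ∂μ, X 0 ω = χ) (hu : ∀ k, 1 ≤ k → u k = 0) (k : ℕ) :
    expectedCost A E X u 0 μ M (k + 1) =
      ENNReal.ofReal ((E χ *ᵥ u 0) ⬝ᵥ transferOp pᵀ ((costOp p A ^ k) M) χ *ᵥ E χ *ᵥ u 0) := by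
  have hLM : 0 ≤ (costOp p A ^ k) M := by
    simpa using monotone_pow_end (monotone_costOp hp A) k hM
  rw [add_comm, expectedCost_add_of_eq_zero hX hp hXm hM hu, expectedCost_succ hX hp hXm hLM]
  exact lintegral_ae_const
    (hX0.mono fun ω hω => by simp only [traj, hω, mulVec_zero, zero_add])

lemma sqE_mulVec {κ d : ℕ} (F : Matrix (Fin κ) (Fin d) ℝ) (v : Fin d → ℝ) :
    sqE (F *ᵥ v) = ENNReal.ofReal (v ⬝ᵥ (Fᵀ * F) *ᵥ v) := by
  rw [← mulVec_mulVec, dotProduct_mulVec v, vecMul_transpose]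
  simp only [sqE, dotProduct, sq]

lemma lintegral_sqE_traj_free (hX : IsMarkovChain μ X p)
    (hp : ∀ i j, 0 ≤ p i j) (hXm : ∀ k, Measurable (X k)) (hX0 : ∀ᵐ ω ∂μ, X 0 ω = χ) (k : ℕ) :
    ∫⁻ ω, sqE (traj A E X (fun _ _ => 0) x0 k ω) ∂μ =
      ENNReal.ofReal (x0 ⬝ᵥ ((costOp p A ^ k) 1) χ *ᵥ x0) := by
  rw [← expectedCost_of_free (E := E) hX hp hXm zero_le_one hX0]
  refine lintegral_congr fun ω => ?_
  simpa using sqE_mulVec (1 : Matrix (Fin n) (Fin n) ℝ) (traj A E X (fun _ _ => 0) x0 k ω)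

lemma tsum_lintegral_sqE_output_impulse {d : ℕ} (C : S → Matrix (Fin d) (Fin n) ℝ)
    (hX : IsMarkovChain μ X p) (hp : ∀ i j, 0 ≤ p i j) (hXm : ∀ k, Measurable (X k))
    (hX0 : ∀ᵐ ω ∂μ, X 0 ω = χ) (i : Fin q) :
    ∑' k, ∫⁻ ω, sqE (C (X k ω) *ᵥ traj A E X (impulse q i) 0 k ω) ∂μ =
      ∑' k, ENNReal.ofReal ((E χ).col i ⬝ᵥ
        transferOp pᵀ ((costOp p A ^ k) fun χ => (C χ)ᵀ * C χ) χ *ᵥ (E χ).col i) := by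
  let u (k : ℕ) (j : Fin q) : ℝ := if k = 0 ∧ j = i then 1 else 0
  have hu (k : ℕ) (hk : 1 ≤ k) : u k = 0 := by
    ext j
    simp [u, Nat.one_le_iff_ne_zero.1 hk]
  have hu0 : E χ *ᵥ u 0 = (E χ).col i := by
    rw [← mulVec_single_one]
    congr 1
    ext j
    simp [u, Pi.single_apply]
  have hCC : 0 ≤ fun χ => (C χ)ᵀ * C χ := fun χ => transpose_mul_self_nonneg (C χ)
  have hcost (k : ℕ) : ∫⁻ ω, sqE (C (X k ω) *ᵥ traj A E X (impulse q i) 0 k ω) ∂μ =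
      expectedCost A E X u 0 μ (fun χ => (C χ)ᵀ * C χ) k :=
    lintegral_congr fun ω => sqE_mulVec _ _
  have hcost0 : expectedCost A E X u 0 μ (fun χ => (C χ)ᵀ * C χ) 0 = 0 := by
    simp [expectedCost, traj]
  simp only [hcost]
  rw [tsum_eq_zero_add' ENNReal.summable, hcost0, zero_add]
  simp only [expectedCost_succ_of_impulse hX hp hXm hCC hX0 hu, hu0]

end DeterministicStart

lemma sum_col_quadratic_eq_trace {ι κ : Type*} [Fintype ι] [Fintype κ] (N : Matrix ι ι ℝ)
    (F : Matrix ι κ ℝ) : ∑ i, F.col i ⬝ᵥ N *ᵥ F.col i = (N * (F * Fᵀ)).trace := by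
  rw [← Matrix.mul_assoc, trace_mul_comm]
  rfl

lemma sum_tsum_col_quadratic_eq_tsum_tracePairing (hp : ∀ i j, 0 ≤ p i j) (hM : 0 ≤ M)
    (A : S → Matrix (Fin n) (Fin n) ℝ) (E : S → Matrix (Fin n) (Fin q) ℝ) {μ₀ : S → ℝ}
    (hμ₀ : ∀ χ, 0 ≤ μ₀ χ) :
    ∑ i, ∑ χ, ENNReal.ofReal (μ₀ χ) * ∑' k, ENNReal.ofReal ((E χ).col i ⬝ᵥ
        transferOp pᵀ ((costOp p A ^ k) M) χ *ᵥ (E χ).col i) =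
      ∑' k, ENNReal.ofReal (tracePairing M
        ((secondMomentOp p A ^ k) (transferOp p fun χ => μ₀ χ • (E χ * (E χ)ᵀ)))) := by
  have hN (k : ℕ) (χ : S) (v : Fin n → ℝ) :
      0 ≤ v ⬝ᵥ transferOp pᵀ ((costOp p A ^ k) M) χ *ᵥ v := by
    have hk : 0 ≤ transferOp pᵀ ((costOp p A ^ k) M) := by
      simpa only [Function.comp_apply, map_zero] using
        ((monotone_transferOp (p := pᵀ) fun i j => hp j i).comp
          (monotone_pow_end (monotone_costOp hp A) k)) hM
    exact (hk χ).posSemidef.dotProduct_mulVec_nonneg v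
  simp only [← ENNReal.tsum_mul_left, ← ENNReal.ofReal_mul (hμ₀ _)]
  simp only [← Summable.tsum_finsetSum fun _ _ => ENNReal.summable]
  refine tsum_congr fun k => ?_
  simp only [← ENNReal.ofReal_sum_of_nonneg fun χ _ => mul_nonneg (hμ₀ χ) (hN k χ _)]
  rw [← ENNReal.ofReal_sum_of_nonneg fun i _ =>
      Finset.sum_nonneg fun χ _ => mul_nonneg (hμ₀ χ) (hN k χ _),
    tracePairing_secondMomentOp_pow, tracePairing_transferOp, tracePairing_apply,
    Finset.sum_comm]
  simp only [← Finset.mul_sum, sum_col_quadratic_eq_trace, Matrix.mul_smul, trace_smul,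
    smul_eq_mul]

lemma forall_costOp_pow_quadratic_le_iff (hp : ∀ i j, 0 ≤ p i j)
    (A : S → Matrix (Fin n) (Fin n) ℝ) :
    (∃ c, 0 < c ∧ ∃ r, 0 ≤ r ∧ r < 1 ∧ ∀ χ (x0 : Fin n → ℝ) (k : ℕ),
      ENNReal.ofReal (x0 ⬝ᵥ ((costOp p A ^ k) 1) χ *ᵥ x0) ≤
        ENNReal.ofReal (c * r ^ k * ∑ i, x0 i ^ 2)) ↔
      DecaysGeometrically (secondMomentOp p A) 1 := by
  rw [← decaysGeometrically_costOp_iff hp]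
  refine exists_congr fun c => and_congr_right fun hc => exists_congr fun r =>
    and_congr_right fun hr => and_congr_right fun _ => ?_
  have hL (k : ℕ) : 0 ≤ (costOp p A ^ k) 1 := by
    simpa using monotone_pow_end (monotone_costOp hp A) k zero_le_one
  have hbound (x0 : Fin n → ℝ) (k : ℕ) : 0 ≤ c * r ^ k * ∑ i, x0 i ^ 2 := by positivity
  simp only [ENNReal.ofReal_le_ofReal_iff (hbound _ _)]
  simp only [Pi.le_def, Pi.smul_apply, Pi.one_apply, le_smul_one_iff (hL _ _), dotProduct, sq]
  exact ⟨fun h k χ v => h χ v k, fun h χ v k => h k χ v⟩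

end ExpectedCost

section ChainConstructions

lemma measurableSet_path {Ω S : Type*} [MeasurableSpace Ω] [MeasurableSpace S]
    [MeasurableSingletonClass S] {X : ℕ → Ω → S} (hXm : ∀ k, Measurable (X k)) (k : ℕ)
    (i : ℕ → S) : MeasurableSet {ω | ∀ l ≤ k, X l ω = i l} := by
  have h : {ω | ∀ l ≤ k, X l ω = i l} = ⋂ l ∈ Set.Iic k, X l ⁻¹' {i l} := by
    ext
    simp
  rw [h]
  exact .biInter (Set.to_countable _) fun l _ => hXm l (measurableSet_singleton _)

lemma measurableSet_path_succ {Ω S : Type*} [MeasurableSpace Ω] [MeasurableSpace S]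
    [MeasurableSingletonClass S] {X : ℕ → Ω → S} (hXm : ∀ k, Measurable (X k)) (k : ℕ)
    (j : S) (i : ℕ → S) : MeasurableSet {ω | X (k + 1) ω = j ∧ ∀ l ≤ k, X l ω = i l} :=
  (hXm (k + 1) (measurableSet_singleton j)).inter (measurableSet_path hXm k i)

namespace IsMarkovChain

variable {Ω Ω' S S' : Type} {mΩ : MeasurableSpace Ω} {mΩ' : MeasurableSpace Ω'} {μ : Measure Ω}
  {μ' : Measure Ω'} {X : ℕ → Ω → S} {p : S → S → ℝ}

lemma comp_measurePreserving [MeasurableSpace S] [MeasurableSingletonClass S]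
    (hX : IsMarkovChain μ X p) (hXm : ∀ k, Measurable (X k)) {φ : Ω' → Ω}
    (hφ : MeasurePreserving φ μ' μ) : IsMarkovChain μ' (fun k ω => X k (φ ω)) p := by
  intro k j i
  have h := hX k j i
  rw [← hφ.measure_preimage (measurableSet_path hXm k i).nullMeasurableSet,
    ← hφ.measure_preimage (measurableSet_path_succ hXm k j i).nullMeasurableSet] at h
  exact h

lemma prodMk [MeasurableSpace S] [MeasurableSingletonClass S] [MeasurableSpace S']
    [MeasurableSingletonClass S'] {Y : ℕ → Ω → S'} {q : S' → S' → ℝ}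
    (hX : IsMarkovChain μ X p) (hY : IsMarkovChain μ Y q)
    (hXY : IndepFun (fun ω l => X l ω) (fun ω l => Y l ω) μ) :
    IsMarkovChain μ (fun k ω => (X k ω, Y k ω)) fun i j => p i.1 j.1 * q i.2 j.2 := by
  intro k j i
  have hpast : μ {ω | ∀ l ≤ k, (X l ω, Y l ω) = i l} =
      μ {ω | ∀ l ≤ k, X l ω = (i l).1} * μ {ω | ∀ l ≤ k, Y l ω = (i l).2} := by
    refine Eq.trans (congrArg μ ?_) (hXY.measure_inter_preimage_eq_mul _ _
      (measurableSet_path measurable_pi_apply k fun l => (i l).1)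
      (measurableSet_path measurable_pi_apply k fun l => (i l).2))
    ext
    simp [Prod.ext_iff, forall_and]
  have hsucc : μ {ω | (X (k + 1) ω, Y (k + 1) ω) = j ∧ ∀ l ≤ k, (X l ω, Y l ω) = i l} =
      μ {ω | X (k + 1) ω = j.1 ∧ ∀ l ≤ k, X l ω = (i l).1} *
        μ {ω | Y (k + 1) ω = j.2 ∧ ∀ l ≤ k, Y l ω = (i l).2} := by
    refine Eq.trans (congrArg μ ?_) (hXY.measure_inter_preimage_eq_mul _ _
      (measurableSet_path_succ measurable_pi_apply k j.1 fun l => (i l).1)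
      (measurableSet_path_succ measurable_pi_apply k j.2 fun l => (i l).2))
    ext
    simp only [Prod.ext_iff, forall_and, Set.mem_inter_iff, Set.mem_preimage, Set.mem_ofPred_eq]
    tauto
  rw [hsucc, hpast, ENNReal.toReal_mul, ENNReal.toReal_mul, hX k j.1 fun l => (i l).1,
    hY k j.2 fun l => (i l).2]
  exact mul_mul_mul_comm _ _ _ _

section Recursion

variable {Z : ℕ → Ω → S'} {g : S → S'} {Φ : S' → S → S'} {π : S' → S}

lemma path_eq_iff_of_recursion (h0 : ∀ ω, Z 0 ω = g (X 0 ω))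
    (hsucc : ∀ k ω, Z (k + 1) ω = Φ (Z k ω) (X (k + 1) ω)) (hg : ∀ x, π (g x) = x)
    (hΦ : ∀ z x, π (Φ z x) = x) (i : ℕ → S') (k : ℕ) (ω : Ω) :
    (∀ l ≤ k, Z l ω = i l) ↔
      (i 0 = g (π (i 0)) ∧ ∀ l < k, i (l + 1) = Φ (i l) (π (i (l + 1)))) ∧
        ∀ l ≤ k, X l ω = π (i l) := by
  constructor
  · intro h
    have hZX (l : ℕ) : π (Z l ω) = X l ω := by cases l <;> simp only [h0, hsucc, hg, hΦ]
    refine ⟨⟨?_, fun l hl => ?_⟩, fun l hl => ?_⟩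
    · rw [← h 0 k.zero_le, hZX, h0]
    · rw [← h l hl.le, ← h (l + 1) hl, hZX, hsucc]
    · rw [← h l hl, hZX]
  · rintro ⟨⟨hi0, hi⟩, h⟩ l hl
    induction l with
    | zero => rw [h0, h 0 hl, ← hi0]
    | succ l ih => rw [hsucc, ih (l.le_succ.trans hl), h _ hl, ← hi l hl]

/-- The possible paths of `Z` correspond to those of `X` under `π`, with equal probabilities. -/
lemma of_recursion [DecidableEq S'] (hX : IsMarkovChain μ X p) (h0 : ∀ ω, Z 0 ω = g (X 0 ω))
    (hsucc : ∀ k ω, Z (k + 1) ω = Φ (Z k ω) (X (k + 1) ω)) (hg : ∀ x, π (g x) = x)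
    (hΦ : ∀ z x, π (Φ z x) = x) :
    IsMarkovChain μ Z fun z z' => if z' = Φ z (π z') then p (π z) (π z') else 0 := by
  intro k j i
  have hstep (ω : Ω) : (Z (k + 1) ω = j ∧ ∀ l ≤ k, Z l ω = i l) ↔
      j = Φ (i k) (π j) ∧ X (k + 1) ω = π j ∧ ∀ l ≤ k, Z l ω = i l := by
    rw [← and_assoc]
    refine and_congr_left fun h => ?_
    rw [hsucc, h k le_rfl]
    constructor
    · rintro rfl
      simp only [hΦ, and_self]
    · rintro ⟨hj, hx⟩
      rw [hx, ← hj]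
  simp_rw [hstep, path_eq_iff_of_recursion h0 hsucc hg hΦ]
  by_cases hi : i 0 = g (π (i 0)) ∧ ∀ l < k, i (l + 1) = Φ (i l) (π (i (l + 1)))
  · by_cases hj : j = Φ (i k) (π j)
    · simpa only [and_iff_right hi, and_iff_right hj, if_pos hj] using hX k (π j) fun l => π (i l)
    · simp [hj]
  · simp [hi]

end Recursion

lemma of_measure_path_eq_prod {ν : S → ENNReal} (hp : ∀ i j, 0 ≤ p i j)
    (h : ∀ k (i : ℕ → S), μ {ω | ∀ l ≤ k, X l ω = i l} =
      ν (i 0) * ∏ l ∈ Finset.range k, ENNReal.ofReal (p (i l) (i (l + 1)))) :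
    IsMarkovChain μ X p := by
  intro k j i
  let i' : ℕ → S := Function.update i (k + 1) j
  have hi' (l : ℕ) (hl : l ≤ k) : i' l = i l :=
    Function.update_of_ne (Nat.lt_succ_of_le hl).ne _ _
  have hpath : {ω | X (k + 1) ω = j ∧ ∀ l ≤ k, X l ω = i l} = {ω | ∀ l ≤ k + 1, X l ω = i' l} := by
    ext ω
    simp only [Set.mem_ofPred_eq, Nat.le_succ_iff, or_imp, forall_and, forall_eq]
    rw [and_comm]
    refine and_congr (forall₂_congr fun l hl => by rw [hi' l hl]) ?_
    simp only [i', Function.update_self]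
  have hprod : ∏ l ∈ Finset.range k, ENNReal.ofReal (p (i' l) (i' (l + 1))) =
      ∏ l ∈ Finset.range k, ENNReal.ofReal (p (i l) (i (l + 1))) := by
    refine Finset.prod_congr rfl fun l hl => ?_
    rw [Finset.mem_range] at hl
    rw [hi' l hl.le, hi' (l + 1) hl]
  have hlast : i' (k + 1) = j := Function.update_self _ _ _
  rw [hpath, h, h, Finset.prod_range_succ, hprod, hi' 0 k.zero_le, hi' k le_rfl, hlast,
    ← mul_assoc, mul_comm, ENNReal.toReal_mul, ENNReal.toReal_ofReal (hp _ _)]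

end IsMarkovChain

lemma measurable_of_recursion {Ω S S' : Type*} [MeasurableSpace Ω] [MeasurableSpace S]
    [DiscreteMeasurableSpace S] [Countable S] [MeasurableSpace S'] [DiscreteMeasurableSpace S']
    [Countable S'] {X : ℕ → Ω → S} {Z : ℕ → Ω → S'} {g : S → S'} {Φ : S' → S → S'}
    (hXm : ∀ k, Measurable (X k)) (h0 : ∀ ω, Z 0 ω = g (X 0 ω))
    (hsucc : ∀ k ω, Z (k + 1) ω = Φ (Z k ω) (X (k + 1) ω)) (k : ℕ) : Measurable (Z k) := by
  induction k with
  | zero =>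
    rw [funext h0]
    exact Measurable.of_discrete.comp (hXm 0)
  | succ k ih =>
    rw [funext (hsucc k)]
    exact (Measurable.of_discrete (f := Function.uncurry Φ)).comp (ih.prodMk (hXm (k + 1)))

end ChainConstructions

section ChainExistence

variable {S : Type}

/-- The state at time `k` of the recursion `x(k+1) = ω k (x k)`, `x 0 = x₀`, driven by the
sequence of maps `ω`. -/
def iterateMaps (x₀ : S) : ℕ → (ℕ → S → S) → S
  | 0, _ => x₀
  | k + 1, ω => ω k (iterateMaps x₀ k ω)

lemma measurable_iterateMaps [Finite S] [MeasurableSpace S] [DiscreteMeasurableSpace S]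
    (x₀ : S) (k : ℕ) : Measurable (iterateMaps x₀ k) := by
  induction k with
  | zero => exact measurable_const
  | succ k ih =>
    exact (Measurable.of_discrete (f := fun z : (S → S) × S => z.1 z.2)).comp
      ((measurable_pi_apply k).prodMk ih)

lemma path_iterateMaps_eq_iff {x₀ : S} {i : ℕ → S} (hi : i 0 = x₀) (k : ℕ) (ω : ℕ → S → S) :
    (∀ l ≤ k, iterateMaps x₀ l ω = i l) ↔ ∀ l < k, ω l (i l) = i (l + 1) := by
  constructor
  · intro h l hl
    rw [← h l hl.le, ← h (l + 1) hl, iterateMaps]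
  · intro h l hl
    induction l with
    | zero => exact hi.symm
    | succ l ih => rw [iterateMaps, ih (l.le_succ.trans hl), h l hl]

variable {p : S → S → ℝ}

lemma exists_random_map [Fintype S] [MeasurableSpace S] [MeasurableSingletonClass S]
    (hp : ∀ i j, 0 ≤ p i j) (hp1 : ∀ i, ∑ j, p i j = 1) :
    ∃ κ : Measure (S → S), IsProbabilityMeasure κ ∧
      ∀ a b, κ {g | g a = b} = ENNReal.ofReal (p a b) := by
  have hsum (a : S) : ∑ j, ENNReal.ofReal (p a j) = 1 := by
    rw [← ENNReal.ofReal_sum_of_nonneg fun j _ => hp a j, hp1, ENNReal.ofReal_one]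
  let ν (a : S) : Measure S := (PMF.ofFintype (fun j => ENNReal.ofReal (p a j)) (hsum a)).toMeasure
  refine ⟨Measure.pi ν, inferInstance, fun a b => ?_⟩
  calc Measure.pi ν {g | g a = b}
      = ν a {b} :=
        (measurePreserving_eval ν a).measure_preimage (measurableSet_singleton b).nullMeasurableSet
    _ = ENNReal.ofReal (p a b) := PMF.toMeasure_apply_singleton _ b (measurableSet_singleton b)

lemma isMarkovChain_iterateMaps [Finite S] [MeasurableSpace S] [DiscreteMeasurableSpace S]
    (hp : ∀ i j, 0 ≤ p i j) {κ : Measure (S → S)}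
    [IsProbabilityMeasure κ] (hκ : ∀ a b, κ {g | g a = b} = ENNReal.ofReal (p a b)) (x₀ : S) :
    IsMarkovChain (Measure.infinitePi fun _ => κ) (iterateMaps x₀) p := by
  classical
  refine .of_measure_path_eq_prod (ν := fun x => if x = x₀ then 1 else 0) hp fun k i => ?_
  by_cases hi : i 0 = x₀
  · have hpath : {ω | ∀ l ≤ k, iterateMaps x₀ l ω = i l} =
        Set.pi (Finset.range k : Set ℕ) fun l => {g | g (i l) = i (l + 1)} := by
      ext ω
      simpa using path_iterateMaps_eq_iff hi k ω
    rw [hpath, Measure.infinitePi_pi _ fun _ _ => .of_discrete, if_pos hi, one_mul]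
    simp only [hκ]
  · have hpath : {ω | ∀ l ≤ k, iterateMaps x₀ l ω = i l} = ∅ :=
      Set.eq_empty_of_forall_notMem fun ω hω => hi (hω 0 k.zero_le).symm
    rw [hpath, measure_empty, if_neg hi, zero_mul]

end ChainExistence

section ExtendedState

variable {NN MM T : ℕ} [NeZero T]

lemma intToFin_add_one (a : ℤ) : intToFin T (a + 1) = intToFin T a + 1 := by
  have hT : (T : ℤ) ≠ 0 := by exact_mod_cast NeZero.ne T
  apply Fin.ext
  rw [Fin.val_add, Fin.val_one']
  simp only [intToFin]
  zify
  rw [Int.toNat_of_nonneg (Int.emod_nonneg _ hT), Int.toNat_of_nonneg (Int.emod_nonneg _ hT),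
    ← Int.add_emod]

lemma intToFin_zero : intToFin T 0 = 0 := by
  apply Fin.ext
  simp [intToFin]

lemma intToFin_val (d : Fin T) : intToFin T (d : ℤ) = d := by
  apply Fin.ext
  simp only [intToFin, ← Int.natCast_mod, Int.toNat_natCast, Nat.mod_eq_of_lt d.2]

/-- The extended state with modes `y = (α, β)` when, failing an observation at the present time,
the last observed mode is `σ` and the residual age of the observation is `ρ`. -/
def observe (f : Fin MM → Bool) (σ : Fin NN) (ρ : Fin T) (y : Fin NN × Fin MM) : XT NN MM T :=
  (y.1, y.2, if f y.2 = true then y.1 else σ, if f y.2 = true then 0 else ρ)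

variable {f : Fin MM → Bool}

lemma inX_observe (σ : Fin NN) (ρ : Fin T) (y : Fin NN × Fin MM) : inX f (observe f σ ρ y) := by
  intro h
  simp only [observe] at h ⊢
  simp [h]

lemma observe_of_inX {χ : XT NN MM T} (hχ : inX f χ) :
    observe f χ.2.2.1 χ.2.2.2 (χ.1, χ.2.1) = χ := by
  obtain ⟨α, β, σ, ρ⟩ := χ
  simp only [inX, observe, Prod.mk.injEq, true_and] at hχ ⊢
  split_ifs with h
  · exact ⟨(hχ h).1, (hχ h).2.symm⟩
  · exact ⟨rfl, rfl⟩

lemma pbar_eq_ite_observe (P : Matrix (Fin NN) (Fin NN) ℝ) (Q : Matrix (Fin MM) (Fin MM) ℝ) :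
    pbar (T := T) P Q f = fun χ χ' =>
      if χ' = observe f χ.2.2.1 (χ.2.2.2 + 1) (χ'.1, χ'.2.1) then
        P χ.1 χ'.1 * Q χ.2.1 χ'.2.1 else 0 := by
  ext ⟨α, β, σ, ρ⟩ ⟨α', β', σ', ρ'⟩
  by_cases h : f β' = true <;> simp [pbar, observe, h, ite_mul, eq_comm]

variable {Ω : Type} (r : ℕ → Ω → Fin NN) (s : ℕ → Ω → Fin MM) (τ₀ : ℤ) (σ₀ : Fin NN)

lemma rbarProc_zero (ω : Ω) : rbarProc (T := T) r s f τ₀ σ₀ 0 ω =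
    observe f σ₀ (intToFin T (-τ₀)) (r 0 ω, s 0 ω) := by
  by_cases h : f (s 0 ω) = true <;>
    simp [rbarProc, sigmaProc, rhoProc, tauZ, observe, h, intToFin_zero]

lemma rbarProc_succ (k : ℕ) (ω : Ω) : rbarProc (T := T) r s f τ₀ σ₀ (k + 1) ω =
    observe f (rbarProc (T := T) r s f τ₀ σ₀ k ω).2.2.1
      ((rbarProc r s f τ₀ σ₀ k ω).2.2.2 + 1) (r (k + 1) ω, s (k + 1) ω) := by
  by_cases h : f (s (k + 1) ω) = true
  · have hex : ∃ j ≤ k + 1, f (s j ω) = true := ⟨k + 1, le_rfl, h⟩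
    simp [rbarProc, sigmaProc, rhoProc, tauZ, observe, h, hex, intToFin_zero]
  · have hex : (∃ j ≤ k + 1, f (s j ω) = true) ↔ ∃ j ≤ k, f (s j ω) = true := by
      simp [Nat.le_succ_iff, or_and_right, exists_or, h]
    have hage (t : ℤ) : ((k + 1 : ℕ) : ℤ) - t = (k - t) + 1 := by push_cast; ring
    simp only [rbarProc, sigmaProc, rhoProc, tauZ, observe, h, hex, Nat.findGreatest_succ,
      hage, intToFin_add_one, if_false, Bool.false_eq_true]

lemma inX_rbarProc (k : ℕ) (ω : Ω) : inX f (rbarProc (T := T) r s f τ₀ σ₀ k ω) := by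
  cases k <;> simp only [rbarProc_zero, rbarProc_succ, inX_observe]

/-- The realization of `θ` given by the extended process `r̄` of a realization of `(r, s)`. -/
def MJLSReal.extended {P : Matrix (Fin NN) (Fin NN) ℝ} {Q : Matrix (Fin MM) (Fin MM) ℝ}
    (S : MJLSReal NN MM P Q) (f : Fin MM → Bool) (τ₀ : ℤ) (σ₀ : Fin NN) :
    ThetaReal NN MM T P Q f where
  Ω := S.Ω
  inst := S.inst
  μ := S.μ
  prob := S.prob
  θ := rbarProc S.r S.s f τ₀ σ₀
  meas :=
    let _ := S.inst
    measurable_of_recursion (fun k => (S.meas_r k).prodMk (S.meas_s k))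
      (g := observe f σ₀ (intToFin T (-τ₀)))
      (Φ := fun χ => observe f χ.2.2.1 (χ.2.2.2 + 1))
      (rbarProc_zero S.r S.s τ₀ σ₀) (rbarProc_succ S.r S.s τ₀ σ₀)
  mem := inX_rbarProc S.r S.s τ₀ σ₀
  markov := by
    let _ := S.inst
    rw [pbar_eq_ite_observe]
    exact (S.markov_r.prodMk S.markov_s S.indep).of_recursion (π := fun χ => (χ.1, χ.2.1))
      (g := observe f σ₀ (intToFin T (-τ₀)))
      (Φ := fun χ => observe f χ.2.2.1 (χ.2.2.2 + 1))
      (rbarProc_zero S.r S.s τ₀ σ₀) (rbarProc_succ S.r S.s τ₀ σ₀) (fun _ => rfl) fun _ _ => rfl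

end ExtendedState

section Realizations

variable {NN MM T : ℕ} [NeZero T] {P : Matrix (Fin NN) (Fin NN) ℝ} {Q : Matrix (Fin MM) (Fin MM) ℝ}

lemma exists_mjlsReal (hP0 : ∀ i j, 0 ≤ P i j) (hP1 : ∀ i, ∑ j, P i j = 1)
    (hQ0 : ∀ i j, 0 ≤ Q i j) (hQ1 : ∀ i, ∑ j, Q i j = 1) (r₀ : Fin NN) (s₀ : Fin MM) :
    ∃ S : MJLSReal NN MM P Q, ∀ ω, S.r 0 ω = r₀ ∧ S.s 0 ω = s₀ := by
  obtain ⟨κ, _, hκ⟩ := exists_random_map hP0 hP1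
  obtain ⟨ν, _, hν⟩ := exists_random_map hQ0 hQ1
  have hr := measurable_iterateMaps r₀
  have hs := measurable_iterateMaps s₀
  refine ⟨{ Ω := (ℕ → Fin NN → Fin NN) × (ℕ → Fin MM → Fin MM)
            inst := inferInstance
            μ := (Measure.infinitePi fun _ => κ).prod (Measure.infinitePi fun _ => ν)
            prob := inferInstance
            r := fun k ω => iterateMaps r₀ k ω.1
            s := fun k ω => iterateMaps s₀ k ω.2
            meas_r := fun k => (hr k).comp measurable_fst
            meas_s := fun k => (hs k).comp measurable_snd
            markov_r := (isMarkovChain_iterateMaps hP0 hκ r₀).comp_measurePreserving hr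
              measurePreserving_fst
            markov_s := (isMarkovChain_iterateMaps hQ0 hν s₀).comp_measurePreserving hs
              measurePreserving_snd
            indep := indepFun_prod (measurable_pi_lambda _ hr) (measurable_pi_lambda _ hs) },
    fun ω => ⟨rfl, rfl⟩⟩

lemma exists_mjlsReal_extended_zero_ae_eq {f : Fin MM → Bool} (hP0 : ∀ i j, 0 ≤ P i j)
    (hP1 : ∀ i, ∑ j, P i j = 1) (hQ0 : ∀ i j, 0 ≤ Q i j) (hQ1 : ∀ i, ∑ j, Q i j = 1)
    (χ : XT NN MM T) :
    ∃ (S : MJLSReal NN MM P Q) (τ₀ : ℤ) (σ₀ : Fin NN), τ₀ ≤ 0 ∧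
      (∀ᵐ ω ∂S.μ, S.r 0 ω = χ.1 ∧ S.s 0 ω = χ.2.1) ∧
      (inX f χ →
        ∀ᵐ ω ∂(S.extended (T := T) f τ₀ σ₀).μ, (S.extended f τ₀ σ₀).θ 0 ω = χ) := by
  obtain ⟨S, hS⟩ := exists_mjlsReal hP0 hP1 hQ0 hQ1 χ.1 χ.2.1
  refine ⟨S, -(χ.2.2.2 : ℤ), χ.2.2.1, by simp, .of_forall hS, fun hχ => .of_forall fun ω => ?_⟩
  refine (rbarProc_zero S.r S.s _ _ ω).trans ?_
  rw [(hS ω).1, (hS ω).2, neg_neg, intToFin_val, observe_of_inX hχ]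

end Realizations

section AdmissibleStates

variable {NN MM T : ℕ} [NeZero T]

/-- The state space `𝔛` of the extended chain, as a type. -/
abbrev AdmissibleState (NN T : ℕ) [NeZero T] (f : Fin MM → Bool) : Type :=
  {χ : XT NN MM T // inX f χ}

instance (f : Fin MM → Bool) : Fintype (AdmissibleState NN T f) := Fintype.ofFinite _

lemma sum_ite_inX {M : Type*} [AddCommMonoid M] (f : Fin MM → Bool)
    [DecidablePred (inX (NN := NN) (T := T) f)] (g : XT NN MM T → M) :
    (∑ χ, if inX f χ then g χ else 0) = ∑ χ : AdmissibleState NN T f, g χ := by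
  rw [← Finset.sum_filter]
  exact Finset.sum_subtype _ (by simp) g

/-- The transition matrix `p̄` of the extended chain on `𝔛`. -/
def admissibleKernel (P : Matrix (Fin NN) (Fin NN) ℝ) (Q : Matrix (Fin MM) (Fin MM) ℝ)
    (f : Fin MM → Bool) : Matrix (AdmissibleState NN T f) (AdmissibleState NN T f) ℝ :=
  of fun χ χ' => pbar P Q f χ.1 χ'.1

variable {P : Matrix (Fin NN) (Fin NN) ℝ} {Q : Matrix (Fin MM) (Fin MM) ℝ} {f : Fin MM → Bool}

lemma admissibleKernel_nonneg (hP0 : ∀ i j, 0 ≤ P i j) (hQ0 : ∀ i j, 0 ≤ Q i j)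
    (χ χ' : AdmissibleState NN T f) : 0 ≤ admissibleKernel P Q f χ χ' := by
  refine mul_nonneg (mul_nonneg ?_ (hP0 _ _)) (hQ0 _ _)
  split_ifs <;> norm_num

namespace ThetaReal

/-- The chain `θ` of a realization, as a process with values in the type `𝔛`. -/
def chain (S : ThetaReal NN MM T P Q f) (k : ℕ) (ω : S.Ω) : AdmissibleState NN T f :=
  ⟨S.θ k ω, S.mem k ω⟩

lemma measurable_chain (S : ThetaReal NN MM T P Q f) (k : ℕ) :
    Measurable[S.inst] (S.chain k) :=
  let _ := S.inst
  (S.meas k).subtype_mk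

lemma isMarkovChain_chain (S : ThetaReal NN MM T P Q f) :
    @IsMarkovChain S.Ω S.inst S.μ _ S.chain (admissibleKernel P Q f) :=
  let _ := S.inst
  .of_comp_injective (p := pbar P Q f) Subtype.val_injective S.markov

end ThetaReal

end AdmissibleStates

section ClosedLoop

open scoped MatrixOrder

variable {NN MM T n m q ℓ : ℕ} [NeZero T]

/-- The operator `R ↦ D̄(A_K R A_Kᵀ)` on families of matrices indexed by `𝔛`. -/
def closedLoopOp (P : Matrix (Fin NN) (Fin NN) ℝ) (Q : Matrix (Fin MM) (Fin MM) ℝ)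
    (f : Fin MM → Bool) (A : Fin NN → Matrix (Fin n) (Fin n) ℝ)
    (B : Fin NN → Matrix (Fin n) (Fin m) ℝ) (K : Fin NN → Fin T → Matrix (Fin m) (Fin n) ℝ) :
    Module.End ℝ (AdmissibleState NN T f → Matrix (Fin n) (Fin n) ℝ) :=
  secondMomentOp (admissibleKernel P Q f) fun χ => AKmat A B K χ.1

/-- The operator `Z ↦ A_Kᵀ (∑ χ', p̄ χ χ' • Z χ') A_K` dual to `closedLoopOp`. -/
def closedLoopCostOp (P : Matrix (Fin NN) (Fin NN) ℝ) (Q : Matrix (Fin MM) (Fin MM) ℝ)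
    (f : Fin MM → Bool) (A : Fin NN → Matrix (Fin n) (Fin n) ℝ)
    (B : Fin NN → Matrix (Fin n) (Fin m) ℝ) (K : Fin NN → Fin T → Matrix (Fin m) (Fin n) ℝ) :
    Module.End ℝ (AdmissibleState NN T f → Matrix (Fin n) (Fin n) ℝ) :=
  costOp (admissibleKernel P Q f) fun χ => AKmat A B K χ.1

/-- The family `C_Kᵀ C_K`, whose quadratic forms give the squared norm of the output. -/
def outputWeight (f : Fin MM → Bool) (C : Fin NN → Matrix (Fin ℓ) (Fin n) ℝ)
    (D : Fin NN → Matrix (Fin ℓ) (Fin m) ℝ) (K : Fin NN → Fin T → Matrix (Fin m) (Fin n) ℝ)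
    (χ : AdmissibleState NN T f) : Matrix (Fin n) (Fin n) ℝ :=
  (CKmat C D K χ.1)ᵀ * CKmat C D K χ.1

/-- The family `D̄(μ̄ E Eᵀ)`: the sum over the `q` impulses of the second moments of the state at
time `1`, for the initial distribution `μ̄`. -/
def impulseCovariance (P : Matrix (Fin NN) (Fin NN) ℝ) (Q : Matrix (Fin MM) (Fin MM) ℝ)
    (f : Fin MM → Bool) (E : Fin NN → Matrix (Fin n) (Fin q) ℝ) (μbar : XT NN MM T → ℝ) :
    AdmissibleState NN T f → Matrix (Fin n) (Fin n) ℝ :=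
  transferOp (admissibleKernel P Q f) fun χ => μbar χ.1 • (E χ.1.1 * (E χ.1.1)ᵀ)

/-- The squared `H₂` norm in operator form, `∑ₖ ∑_χ tr(C_Kᵀ C_K 𝓛ᵏ(G))` with `𝓛 = closedLoopOp` and
`G = impulseCovariance`. -/
def h2NormSq (P : Matrix (Fin NN) (Fin NN) ℝ) (Q : Matrix (Fin MM) (Fin MM) ℝ)
    (f : Fin MM → Bool) (A : Fin NN → Matrix (Fin n) (Fin n) ℝ)
    (B : Fin NN → Matrix (Fin n) (Fin m) ℝ) (C : Fin NN → Matrix (Fin ℓ) (Fin n) ℝ)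
    (D : Fin NN → Matrix (Fin ℓ) (Fin m) ℝ) (E : Fin NN → Matrix (Fin n) (Fin q) ℝ)
    (K : Fin NN → Fin T → Matrix (Fin m) (Fin n) ℝ) (μbar : XT NN MM T → ℝ) : ENNReal :=
  ∑' k, ENNReal.ofReal (tracePairing (outputWeight f C D K)
    ((closedLoopOp P Q f A B K ^ k) (impulseCovariance P Q f E μbar)))

lemma outputWeight_nonneg (f : Fin MM → Bool) (C : Fin NN → Matrix (Fin ℓ) (Fin n) ℝ)
    (D : Fin NN → Matrix (Fin ℓ) (Fin m) ℝ) (K : Fin NN → Fin T → Matrix (Fin m) (Fin n) ℝ) :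
    0 ≤ outputWeight f C D K := fun χ => transpose_mul_self_nonneg (CKmat C D K χ.1)

lemma impulseCovariance_nonneg {P : Matrix (Fin NN) (Fin NN) ℝ} {Q : Matrix (Fin MM) (Fin MM) ℝ}
    {f : Fin MM → Bool} (hP0 : ∀ i j, 0 ≤ P i j) (hQ0 : ∀ i j, 0 ≤ Q i j)
    (E : Fin NN → Matrix (Fin n) (Fin q) ℝ) {μbar : XT NN MM T → ℝ} (hμ0 : ∀ χ, 0 ≤ μbar χ) :
    0 ≤ impulseCovariance P Q f E μbar := by
  have h : 0 ≤ fun χ : AdmissibleState NN T f => μbar χ.1 • (E χ.1.1 * (E χ.1.1)ᵀ) := fun χ =>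
    smul_nonneg (hμ0 χ) (mul_transpose_self_nonneg _)
  exact (map_zero _).ge.trans (monotone_transferOp (admissibleKernel_nonneg hP0 hQ0) h)

variable {P : Matrix (Fin NN) (Fin NN) ℝ} {Q : Matrix (Fin MM) (Fin MM) ℝ} {f : Fin MM → Bool}
  {A : Fin NN → Matrix (Fin n) (Fin n) ℝ} {B : Fin NN → Matrix (Fin n) (Fin m) ℝ}
  {C : Fin NN → Matrix (Fin ℓ) (Fin n) ℝ} {D : Fin NN → Matrix (Fin ℓ) (Fin m) ℝ}
  {E : Fin NN → Matrix (Fin n) (Fin q) ℝ} {K : Fin NN → Fin T → Matrix (Fin m) (Fin n) ℝ}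
  {μbar : XT NN MM T → ℝ} {γ : ℝ}

namespace ThetaReal

variable (S : ThetaReal NN MM T P Q f) (hP0 : ∀ i j, 0 ≤ P i j) (hQ0 : ∀ i j, 0 ≤ Q i j)
  {χ : AdmissibleState NN T f} (hχ : ∀ᵐ ω ∂S.μ, S.θ 0 ω = χ)

include hP0 hQ0 hχ

lemma lintegral_sqE_state (x0 : Fin n → ℝ) (k : ℕ) :
    ∫⁻ ω, sqE (traj (AKmat A B K) (fun χ => E χ.1) S.θ (fun _ _ => 0) x0 k ω) ∂S.μ =
      ENNReal.ofReal (x0 ⬝ᵥ ((closedLoopCostOp P Q f A B K ^ k) 1) χ *ᵥ x0) := by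
  let _ := S.inst
  have := S.prob
  rw [closedLoopCostOp, ← lintegral_sqE_traj_free (E := fun χ : AdmissibleState NN T f => E χ.1.1)
    S.isMarkovChain_chain (admissibleKernel_nonneg hP0 hQ0) S.measurable_chain
    (hχ.mono fun _ h => Subtype.ext h),
    ← traj_comp Subtype.val (AKmat A B K) fun χ => E χ.1]
  rfl

lemma H2TermBar_eq (i : Fin q) :
    H2TermBar S A B C D E K i = ∑' k, ENNReal.ofReal ((E χ.1.1).col i ⬝ᵥ
      transferOp (admissibleKernel P Q f)ᵀ
        ((closedLoopCostOp P Q f A B K ^ k) (outputWeight f C D K)) χ *ᵥ (E χ.1.1).col i) := by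
  let _ := S.inst
  have := S.prob
  have h := tsum_lintegral_sqE_output_impulse
    (A := fun χ : AdmissibleState NN T f => AKmat A B K χ.1) (E := fun χ => E χ.1.1)
    (fun χ : AdmissibleState NN T f => CKmat C D K χ.1)
    S.isMarkovChain_chain (admissibleKernel_nonneg hP0 hQ0) S.measurable_chain
    (hχ.mono fun _ h => Subtype.ext h) i
  rw [← traj_comp Subtype.val (AKmat A B K) fun χ => E χ.1] at h
  exact h

end ThetaReal

section Stability

lemma decaysGeometrically_closedLoopOp_iff (hP0 : ∀ i j, 0 ≤ P i j) (hQ0 : ∀ i j, 0 ≤ Q i j) :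
    DecaysGeometrically (closedLoopOp P Q f A B K) 1 ↔
      ∃ c, 0 < c ∧ ∃ r, 0 ≤ r ∧ r < 1 ∧ ∀ (χ : AdmissibleState NN T f) (x0 : Fin n → ℝ) (k : ℕ),
        ENNReal.ofReal (x0 ⬝ᵥ ((closedLoopCostOp P Q f A B K ^ k) 1) χ *ᵥ x0) ≤
          ENNReal.ofReal (c * r ^ k * ∑ i, x0 i ^ 2) :=
  (forall_costOp_pow_quadratic_le_iff (admissibleKernel_nonneg hP0 hQ0) _).symm

theorem meanSquareStable_tfae (hP0 : ∀ i j, 0 ≤ P i j) (hP1 : ∀ i, ∑ j, P i j = 1)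
    (hQ0 : ∀ i j, 0 ≤ Q i j) (hQ1 : ∀ i, ∑ j, Q i j = 1) :
    List.TFAE [MeanSquareStable P Q f A B E K, MeanSquareStableBar P Q f A B E K,
      DecaysGeometrically (closedLoopOp P Q f A B K) 1] := by
  tfae_have 2 → 1 := by
    rintro ⟨c, hc, r, hr0, hr1, h⟩
    refine ⟨c, hc, r, hr0, hr1, fun S τ₀ _ σ₀ r₀ s₀ hrs x0 k => ?_⟩
    refine h (S.extended f τ₀ σ₀) _ (inX_observe σ₀ (intToFin T (-τ₀)) (r₀, s₀)) ?_ x0 k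
    filter_upwards [hrs] with ω hω
    rw [← hω.1, ← hω.2]
    exact rbarProc_zero S.r S.s τ₀ σ₀ ω
  tfae_have 1 → 3 := by
    rw [decaysGeometrically_closedLoopOp_iff hP0 hQ0]
    rintro ⟨c, hc, r, hr0, hr1, h⟩
    refine ⟨c, hc, r, hr0, hr1, fun χ x0 k => ?_⟩
    obtain ⟨S, τ₀, σ₀, hτ₀, hrs, hS⟩ :=
      exists_mjlsReal_extended_zero_ae_eq (f := f) hP0 hP1 hQ0 hQ1 χ.1
    rw [← ThetaReal.lintegral_sqE_state (E := E) _ hP0 hQ0 (hS χ.2)]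
    exact h S τ₀ hτ₀ σ₀ _ _ hrs x0 k
  tfae_have 3 → 2 := by
    rw [decaysGeometrically_closedLoopOp_iff hP0 hQ0]
    rintro ⟨c, hc, r, hr0, hr1, h⟩
    refine ⟨c, hc, r, hr0, hr1, fun S χ hχ hstart x0 k => ?_⟩
    rw [S.lintegral_sqE_state hP0 hQ0 (χ := ⟨χ, hχ⟩) hstart]
    exact h ⟨χ, hχ⟩ x0 k
  tfae_finish

end Stability

section H2Norm

open Classical in
lemma sum_H2TermBar_eq (hP0 : ∀ i j, 0 ≤ P i j) (hQ0 : ∀ i j, 0 ≤ Q i j)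
    (hμ0 : ∀ χ, 0 ≤ μbar χ) {S : Fin q → XT NN MM T → ThetaReal NN MM T P Q f}
    (hS : ∀ i χ, inX f χ → ∀ᵐ ω ∂(S i χ).μ, (S i χ).θ 0 ω = χ) :
    (∑ i, ∑ χ, if inX f χ then
        ENNReal.ofReal (μbar χ) * H2TermBar (S i χ) A B C D E K i else 0) =
      h2NormSq P Q f A B C D E K μbar := by
  rw [h2NormSq, closedLoopOp, impulseCovariance, ← sum_tsum_col_quadratic_eq_tsum_tracePairing
    (admissibleKernel_nonneg hP0 hQ0) (outputWeight_nonneg f C D K) _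
    (fun χ : AdmissibleState NN T f => E χ.1.1) fun χ => hμ0 χ]
  simp only [sum_ite_inX]
  refine Finset.sum_congr rfl fun i _ => Finset.sum_congr rfl fun χ _ => ?_
  rw [(S i χ.1).H2TermBar_eq hP0 hQ0 (hS i χ.1 χ.2), closedLoopCostOp]

theorem h2SqLt_tfae (hP0 : ∀ i j, 0 ≤ P i j) (hP1 : ∀ i, ∑ j, P i j = 1)
    (hQ0 : ∀ i j, 0 ≤ Q i j) (hQ1 : ∀ i, ∑ j, Q i j = 1) (hμ0 : ∀ χ, 0 ≤ μbar χ) :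
    List.TFAE [H2SqLtSigma P Q f A B C D E K μbar γ, H2SqLtBar P Q f A B C D E K μbar γ,
      h2NormSq P Q f A B C D E K μbar < ENNReal.ofReal γ] := by
  tfae_have 2 → 1 := fun h S τ σ hS =>
    h (fun i χ => (S i χ).extended f (τ i χ) (σ i χ)) fun i χ hχ => (hS i χ hχ).2
  tfae_have 1 → 3 := fun h => by
    choose S τ σ hτ _ hS using fun χ : XT NN MM T =>
      exists_mjlsReal_extended_zero_ae_eq (f := f) hP0 hP1 hQ0 hQ1 χ
    rw [← sum_H2TermBar_eq hP0 hQ0 hμ0 fun _ => hS]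
    exact h (fun _ => S) (fun _ => τ) (fun _ => σ) fun _ χ hχ => ⟨hτ χ, hS χ hχ⟩
  tfae_have 3 → 2 := fun h S hS => by rwa [sum_H2TermBar_eq hP0 hQ0 hμ0 hS]
  tfae_finish

end H2Norm

section MatrixInequality

lemma Dop_eq_closedLoopOp_add (Qmat : XT NN MM T → Matrix (Fin n) (Fin n) ℝ)
    (χ : AdmissibleState NN T f) :
    Dop P Q f (fun χ' => AKmat A B K χ' * Qmat χ' * (AKmat A B K χ')ᵀ +
        μbar χ' • (E χ'.1 * (E χ'.1)ᵀ)) χ =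
      closedLoopOp P Q f A B K (fun χ => Qmat χ.1) χ + impulseCovariance P Q f E μbar χ := by
  classical
  simp only [Dop, sum_ite_inX, closedLoopOp, secondMomentOp, impulseCovariance,
    LinearMap.comp_apply, transferOp_apply, congrOp_apply, smul_add, Finset.sum_add_distrib]
  rfl

lemma tracePairing_outputWeight [DecidablePred (inX (NN := NN) (T := T) f)]
    (Qmat : XT NN MM T → Matrix (Fin n) (Fin n) ℝ) :
    tracePairing (outputWeight f C D K) (fun χ => Qmat χ.1) =
      ∑ χ, if inX f χ then (CKmat C D K χ * Qmat χ * (CKmat C D K χ)ᵀ).trace else 0 := by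
  rw [sum_ite_inX, tracePairing_apply]
  refine Finset.sum_congr rfl fun χ _ => ?_
  rw [outputWeight, Matrix.mul_assoc, trace_mul_comm]

lemma exists_admissible_family_iff {α : Type*} [Inhabited α]
    {p : (AdmissibleState NN T f → α) → Prop} :
    (∃ x : XT NN MM T → α, p fun χ => x χ.1) ↔ ∃ y, p y := by
  classical
  refine ⟨fun ⟨x, hx⟩ => ⟨_, hx⟩, fun ⟨y, hy⟩ => ?_⟩
  refine ⟨fun χ => if hχ : inX f χ then y ⟨χ, hχ⟩ else default, ?_⟩
  convert hy with χ
  exact dif_pos χ.2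

open Classical in
theorem exists_lmi_iff_exists_isUniformlyPositive :
    (∃ Qmat : XT NN MM T → Matrix (Fin n) (Fin n) ℝ, (∀ χ, inX f χ → (Qmat χ).PosDef) ∧
        (∑ χ, if inX f χ then (CKmat C D K χ * Qmat χ * (CKmat C D K χ)ᵀ).trace else 0) < γ ∧
        ∀ χ, inX f χ → (Qmat χ - Dop P Q f (fun χ' => AKmat A B K χ' * Qmat χ' * (AKmat A B K χ')ᵀ +
          μbar χ' • (E χ'.1 * (E χ'.1)ᵀ)) χ).PosDef) ↔
      ∃ R : AdmissibleState NN T f → Matrix (Fin n) (Fin n) ℝ, IsUniformlyPositive 1 R ∧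
        tracePairing (outputWeight f C D K) R < γ ∧
        IsUniformlyPositive 1
          (R - (closedLoopOp P Q f A B K R + impulseCovariance P Q f E μbar)) := by
  rw [← exists_admissible_family_iff]
  refine exists_congr fun Qmat => ?_
  rw [← tracePairing_outputWeight, ← forall_posDef_iff_isUniformlyPositive,
    ← forall_posDef_iff_isUniformlyPositive, Subtype.forall, Subtype.forall]
  simp only [Pi.sub_apply, Pi.add_apply, ← Dop_eq_closedLoopOp_add]

theorem decays_and_h2NormSq_lt_iff_exists_isUniformlyPositive (hP0 : ∀ i j, 0 ≤ P i j)
    (hQ0 : ∀ i j, 0 ≤ Q i j) (hμ0 : ∀ χ, 0 ≤ μbar χ) :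
    (DecaysGeometrically (closedLoopOp P Q f A B K) 1 ∧
      h2NormSq P Q f A B C D E K μbar < ENNReal.ofReal γ) ↔
      ∃ R : AdmissibleState NN T f → Matrix (Fin n) (Fin n) ℝ, IsUniformlyPositive 1 R ∧
        tracePairing (outputWeight f C D K) R < γ ∧
        IsUniformlyPositive 1
          (R - (closedLoopOp P Q f A B K R + impulseCovariance P Q f E μbar)) :=
  decays_and_cost_lt_iff_exists_lyapunov isOrderUnit_one
    (monotone_secondMomentOp (admissibleKernel_nonneg hP0 hQ0) _)
    (monotone_tracePairing (outputWeight_nonneg f C D K)) (impulseCovariance_nonneg hP0 hQ0 E hμ0)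

end MatrixInequality

end ClosedLoop

open Classical in
/-- equivalence of (i) `Σ_K` MSS with `‖Σ_K‖₂² < γ`, (ii) `Σ̄_K` MSS
with `‖Σ̄_K‖₂² < γ`, and (iii) existence of positive definite `Q_χ` with
`∑_χ tr(C_{K,χ} Q_χ C_{K,χ}ᵀ) < γ` and `Q_χ - D̄_χ(A_K Q A_Kᵀ + μ̄ E_K E_Kᵀ) > 0`. -/
theorem h2_characterization
    {NN MM T n m q ℓ : ℕ} [NeZero NN] [NeZero MM] [NeZero T]
    [NeZero n] [NeZero m] [NeZero q] [NeZero ℓ]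
    (P : Matrix (Fin NN) (Fin NN) ℝ) (Qm : Matrix (Fin MM) (Fin MM) ℝ)
    (hP0 : ∀ i j, 0 ≤ P i j) (hP1 : ∀ i, ∑ j, P i j = 1)
    (hQ0 : ∀ i j, 0 ≤ Qm i j) (hQ1 : ∀ i, ∑ j, Qm i j = 1)
    (f : Fin MM → Bool)
    (A : Fin NN → Matrix (Fin n) (Fin n) ℝ) (B : Fin NN → Matrix (Fin n) (Fin m) ℝ)
    (C : Fin NN → Matrix (Fin ℓ) (Fin n) ℝ) (D : Fin NN → Matrix (Fin ℓ) (Fin m) ℝ)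
    (E : Fin NN → Matrix (Fin n) (Fin q) ℝ)
    (K : Fin NN → Fin T → Matrix (Fin m) (Fin n) ℝ)
    (γ : ℝ) (hγ : 0 < γ)
    (μbar : XT NN MM T → ℝ) (hμ0 : ∀ χ, 0 ≤ μbar χ)
    (hμsupp : ∀ χ, ¬ inX f χ → μbar χ = 0)
    (hμ1 : ∑ χ : XT NN MM T, μbar χ = 1) :
    ((MeanSquareStable P Qm f A B E K ∧ H2SqLtSigma P Qm f A B C D E K μbar γ)
      ↔ (MeanSquareStableBar P Qm f A B E K ∧ H2SqLtBar P Qm f A B C D E K μbar γ))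
    ∧ ((MeanSquareStableBar P Qm f A B E K ∧ H2SqLtBar P Qm f A B C D E K μbar γ)
        ↔ ∃ Qmat : XT NN MM T → Matrix (Fin n) (Fin n) ℝ,
            (∀ χ, inX f χ → (Qmat χ).PosDef) ∧
            (∑ χ : XT NN MM T, if inX f χ
                then (CKmat C D K χ * Qmat χ * (CKmat C D K χ)ᵀ).trace else 0) < γ ∧
            ∀ χ, inX f χ →
              (Qmat χ - Dop P Qm f
                (fun χ' => AKmat A B K χ' * Qmat χ' * (AKmat A B K χ')ᵀ
                  + μbar χ' • (E χ'.1 * (E χ'.1)ᵀ)) χ).PosDef) := by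
  have hstab := meanSquareStable_tfae (f := f) (A := A) (B := B) (E := E) (K := K) hP0 hP1 hQ0 hQ1
  have hnorm := h2SqLt_tfae (f := f) (A := A) (B := B) (C := C) (D := D) (E := E) (K := K) (γ := γ)
    hP0 hP1 hQ0 hQ1 hμ0
  refine ⟨and_congr (hstab.out 0 1) (hnorm.out 0 1),
    (and_congr (hstab.out 1 2) (hnorm.out 1 2)).trans ?_⟩
  rw [decays_and_h2NormSq_lt_iff_exists_isUniformlyPositive hP0 hQ0 hμ0]
  exact exists_lmi_iff_exists_isUniformlyPositive.symm

end
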